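/- arXiv:1402.4559 — 11 statements merged into one kernel-verified Lean document; each statement's English description precedes it below -/
import Mathlib

section
/- Let R be a finite-dimensional algebra over a field k and let B : R × R → k be a nondegenerate associative bilinear form (associative means B(r*s, t) = B(r, s*t) for all r, s, t ∈ R). Then there exists a unique function σ : R → R satisfying B(r, s) = B(s, σ(r)) for all r, s ∈ R, and this σ is a k-algebra automorphism of R. -/
section PerfectPairing

theorem eq_of_forall_perfPair_apply_eq {k M N : Type*} [CommRing k] [AddCommGroup M] [Module k M]
    [AddCommGroup N] [Module k N] (B : M →ₗ[k] N →ₗ[k] k) [B.IsPerfPair] {x y : N}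
    (h : ∀ z, B z x = B z y) : x = y :=
  (LinearMap.IsPerfPair.bijective_right B).injective (LinearMap.ext h)

variable {k M : Type*} [CommRing k] [AddCommGroup M] [Module k M]
  (B : M →ₗ[k] M →ₗ[k] k) [B.IsPerfPair]

/-- The asymmetry of a perfect pairing `B` of a module with itself: the linear automorphism `σ`
with `B x y = B y (σ x)`, obtained by composing `x ↦ B x ·` with the inverse of `y ↦ B · y`.
For an associative form on an algebra it is the Nakayama automorphism. -/
noncomputable def asymmetry : M ≃ₗ[k] M :=
  B.toPerfPair.trans B.flip.toPerfPair.symm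

theorem apply_asymmetry (x y : M) : B y (asymmetry B x) = B x y :=
  B.apply_toPerfPair_flip (B x) y

variable {B} in
theorem eq_asymmetry {σ : M → M} (hσ : ∀ x y, B x y = B y (σ x)) : σ = asymmetry B :=
  funext fun x ↦ eq_of_forall_perfPair_apply_eq B fun y ↦ by rw [← hσ, apply_asymmetry]

end PerfectPairing

section AssociativeForm

variable {k R : Type*} [CommRing k]

theorem asymmetry_mul [NonUnitalNonAssocRing R] [Module k R] {B : R →ₗ[k] R →ₗ[k] k}
    [B.IsPerfPair] (hassoc : ∀ r s t, B (r * s) t = B r (s * t)) (r s : R) :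
    asymmetry B (r * s) = asymmetry B r * asymmetry B s := by
  refine eq_of_forall_perfPair_apply_eq B fun t ↦ ?_
  calc B t (asymmetry B (r * s))
      = B (r * s) t := apply_asymmetry B _ _
    _ = B r (s * t) := hassoc r s t
    _ = B (s * t) (asymmetry B r) := (apply_asymmetry B _ _).symm
    _ = B s (t * asymmetry B r) := hassoc s t _
    _ = B (t * asymmetry B r) (asymmetry B s) := (apply_asymmetry B _ _).symm
    _ = B t (asymmetry B r * asymmetry B s) := hassoc t _ _

theorem asymmetry_one [NonAssocRing R] [Module k R] {B : R →ₗ[k] R →ₗ[k] k}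
    [B.IsPerfPair] (hassoc : ∀ r s t, B (r * s) t = B r (s * t)) :
    asymmetry B 1 = 1 := by
  refine eq_of_forall_perfPair_apply_eq B fun t ↦ ?_
  calc B t (asymmetry B 1)
      = B 1 t := apply_asymmetry B _ _
    _ = B 1 (t * 1) := by rw [mul_one]
    _ = B (1 * t) 1 := (hassoc 1 t 1).symm
    _ = B t 1 := by rw [one_mul]

/-- The Nakayama automorphism of an algebra with respect to an associative perfect pairing:
the asymmetry of the pairing, as an algebra automorphism. -/
noncomputable def nakayamaAut [Ring R] [Algebra k R] (B : R →ₗ[k] R →ₗ[k] k) [B.IsPerfPair]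
    (hassoc : ∀ r s t, B (r * s) t = B r (s * t)) : R ≃ₐ[k] R :=
  .ofLinearEquiv (asymmetry B) (asymmetry_one hassoc) (asymmetry_mul hassoc)

end AssociativeForm

theorem isPerfPair_of_nondegenerate {k M N : Type*} [Field k] [AddCommGroup M] [Module k M]
    [AddCommGroup N] [Module k N] [FiniteDimensional k M] {B : M →ₗ[k] N →ₗ[k] k}
    (hB : B.Nondegenerate) : B.IsPerfPair :=
  .of_injective
    (LinearMap.ker_eq_bot.mp (LinearMap.separatingLeft_iff_ker_eq_bot.mp hB.1))
    (LinearMap.ker_eq_bot.mp (LinearMap.separatingRight_iff_flip_ker_eq_bot.mp hB.2))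

theorem nakayama_exists_unique_and_isAlgAut_general
    {k R : Type*} [CommRing k] [Ring R] [Algebra k R]
    (B : R →ₗ[k] R →ₗ[k] k) [B.IsPerfPair]
    (hassoc : ∀ r s t : R, B (r * s) t = B r (s * t)) :
    (∃! σ : R → R, ∀ r s : R, B r s = B s (σ r)) ∧
      (∀ σ : R → R, (∀ r s : R, B r s = B s (σ r)) →
        ∃ e : R ≃ₐ[k] R, ⇑e = σ) :=
  ⟨⟨asymmetry B, fun r s ↦ (apply_asymmetry B r s).symm, fun _ hσ ↦ eq_asymmetry hσ⟩,
    fun _ hσ ↦ ⟨nakayamaAut B hassoc, (eq_asymmetry hσ).symm⟩⟩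

/-- If `B` is a nondegenerate associative bilinear form on a
finite-dimensional algebra `R` over a field `k`, then there is a unique function
`σ : R → R` with `B r s = B s (σ r)` for all `r s`, and this `σ` is a
`k`-algebra automorphism of `R` (the Nakayama automorphism). -/
theorem nakayama_exists_unique_and_isAlgAut
    {k R : Type*} [Field k] [Ring R] [Algebra k R] [FiniteDimensional k R]
    (B : R →ₗ[k] R →ₗ[k] k)
    (hnd₁ : ∀ r : R, (∀ s : R, B r s = 0) → r = 0)
    (hnd₂ : ∀ s : R, (∀ r : R, B r s = 0) → s = 0)
    (hassoc : ∀ r s t : R, B (r * s) t = B r (s * t)) :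
    (∃! σ : R → R, ∀ r s : R, B r s = B s (σ r)) ∧
      (∀ σ : R → R, (∀ r s : R, B r s = B s (σ r)) →
        ∃ e : R ≃ₐ[k] R, ⇑e = σ) := by
  have : B.IsPerfPair := isPerfPair_of_nondegenerate ⟨hnd₁, hnd₂⟩
  exact nakayama_exists_unique_and_isAlgAut_general B hassoc
end

section
/- Let R be a ring that is a finite-dimensional algebra over a field k₁ and also a finite-dimensional algebra over a field k₂, and suppose R is a local ring. Let λ₁ : R → k₁ be a k₁-linear functional whose kernel contains no nonzero left ideals of R, and let σ : R → R be a ring automorphism satisfying λ₁(r*s) = λ₁(s * σ(r)) for all r, s ∈ R. Then there exists a k₂-linear functional λ₂ : R → k₂ whose kernel contains no nonzero left ideals of R and which satisfies λ₂(r*s) = λ₂(s * σ(r)) for all r, s ∈ R. -/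
/-!
Let `x` be an element with `λ₁ x ≠ 0` and `λ₁ (a * x) = 0` for every non-unit `a`; it exists because
the non-units form a proper subspace and `λ₁ (a * b)` is a perfect pairing. If a left ideal `I` does
not contain `x`, then some functional `λ₁ (a * ·)` kills `I` but not `x`. Hence `a` is a unit, so
`λ₁` kills `I = a * I` and `I = 0`. Thus `x` lies in every nonzero left ideal, and a functional over
any field is Frobenius as soon as it does not vanish at `x`.

The elements `r * s - s * σ r` generate the same additive group as `k`-subspace for every `k`.
Since `λ₁` kills this group, it does not contain `x`, and some `k₂`-linear functional kills it
without killing `x`.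
-/

/-- A Frobenius functional: a linear form whose kernel contains no nonzero left ideal. -/
def IsFrobeniusFunctional {k R : Type*} [Semiring k] [Semiring R] [Module k R]
    (lam : R →ₗ[k] k) : Prop :=
  ∀ I : Ideal R, (I : Set R) ⊆ {x | lam x = 0} → I = ⊥

/-- The space of `σ`-twisted commutators `r * s - s * σ r`. A `k`-linear form `lam` vanishes on it
exactly when `lam (r * s) = lam (s * σ r)` for all `r` and `s`. -/
def twistedCommutatorSubmodule (k : Type*) {R : Type*} [Semiring k] [Ring R] [Module k R]
    (σ : R → R) : Submodule k R :=
  Submodule.span k {z | ∃ r s : R, r * s - s * σ r = z}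

section TwistedCommutator

variable {k R : Type*} [CommSemiring k] [Ring R] [Algebra k R] {σ : R → R}

theorem map_eq_zero_of_mem_twistedCommutatorSubmodule {A : Type*} [AddGroup A] (f : R →+ A)
    (hf : ∀ r s, f (r * s) = f (s * σ r)) {z : R} (hz : z ∈ twistedCommutatorSubmodule k σ) :
    f z = 0 := by
  induction hz using Submodule.closure_induction with
  | zero => exact map_zero f
  | add u v _ _ hu hv => rw [map_add, hu, hv, add_zero]
  | smul_mem t z hz =>
    obtain ⟨r, s, rfl⟩ := hz
    have smul_commutator : t • (r * s - s * σ r) = r * (t • s) - (t • s) * σ r := by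
      rw [smul_sub, mul_smul_comm, smul_mul_assoc]
    rw [smul_commutator, map_sub, hf, sub_self]

theorem map_mul_eq_of_twistedCommutatorSubmodule_le_ker {M : Type*} [AddCommGroup M] [Module k M]
    {g : R →ₗ[k] M} (hg : twistedCommutatorSubmodule k σ ≤ LinearMap.ker g) (r s : R) :
    g (r * s) = g (s * σ r) := by
  have hz : g (r * s - s * σ r) = 0 := hg (Submodule.subset_span ⟨r, s, rfl⟩)
  rwa [map_sub, sub_eq_zero] at hz

end TwistedCommutator

section FrobeniusFunctional

variable {k R : Type*} [Semiring k] [Semiring R] [Module k R] {lam : R →ₗ[k] k}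

theorem isFrobeniusFunctional_of_apply_ne_zero {x : R} (hx : lam x ≠ 0)
    (hmem : ∀ I : Ideal R, I ≠ ⊥ → x ∈ I) : IsFrobeniusFunctional lam := fun I hI ↦
  by_contra fun hne ↦ hx (hI (hmem I hne))

theorem IsFrobeniusFunctional.eq_zero_of_forall_mul (h : IsFrobeniusFunctional lam) {y : R}
    (hy : ∀ s, lam (s * y) = 0) : y = 0 := by
  refine Ideal.span_singleton_eq_bot.1 (h _ fun z hz ↦ ?_)
  obtain ⟨s, rfl⟩ := Ideal.mem_span_singleton'.1 hz
  exact hy s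

end FrobeniusFunctional

/-- The non-units of a local `k`-algebra as a `k`-subspace; as an additive monoid it is
`IsLocalRing.nonunitsAddSubmonoid`. -/
def nonunitsSubmodule (k R : Type*) [Field k] [Ring R] [Algebra k R] [IsLocalRing R] :
    Submodule k R where
  __ := IsLocalRing.nonunitsAddSubmonoid R
  smul_mem' t a ha := by
    rcases eq_or_ne t 0 with rfl | ht
    · rw [zero_smul]
      exact zero_mem (IsLocalRing.nonunitsAddSubmonoid R)
    · exact fun hu ↦ ha ((isUnit_smul_iff (Units.mk0 t ht) a).1 hu)

namespace IsFrobeniusFunctional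

variable {k R : Type*} [Field k] [Ring R] [Algebra k R] [FiniteDimensional k R]
  {lam : R →ₗ[k] k}

theorem isPerfPair (h : IsFrobeniusFunctional lam) :
    ((LinearMap.mul k R).compr₂ lam).IsPerfPair := by
  let p := (LinearMap.mul k R).compr₂ lam
  have flip_injective : Function.Injective p.flip :=
    (injective_iff_map_eq_zero _).2 fun _ hy ↦
      h.eq_zero_of_forall_mul fun s ↦ LinearMap.congr_fun hy s
  have flip_surjective : Function.Surjective p.flip :=
    (LinearMap.injective_iff_surjective_of_finrank_eq_finrank
      Subspace.dual_finrank_eq.symm).1 flip_injective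
  exact (LinearMap.IsPerfPair.of_bijective p.flip ⟨flip_injective, flip_surjective⟩).flip

theorem exists_forall_apply_eq_mul_left (h : IsFrobeniusFunctional lam) (f : R →ₗ[k] k) :
    ∃ a, ∀ s, f s = lam (a * s) := by
  obtain ⟨a, rfl⟩ := h.isPerfPair.bijective_left.surjective f
  exact ⟨a, fun _ ↦ rfl⟩

theorem exists_forall_apply_eq_mul_right (h : IsFrobeniusFunctional lam) (f : R →ₗ[k] k) :
    ∃ x, ∀ s, f s = lam (s * x) := by
  obtain ⟨x, rfl⟩ := h.isPerfPair.bijective_right.surjective f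
  exact ⟨x, fun _ ↦ rfl⟩

theorem mem_of_forall_nonunits (h : IsFrobeniusFunctional lam) {x : R}
    (hx : ∀ a ∈ nonunits R, lam (a * x) = 0) {I : Ideal R} (hI : I ≠ ⊥) : x ∈ I := by
  by_contra hxI
  obtain ⟨f, hfx, hfI⟩ :=
    Submodule.exists_le_ker_of_notMem (p := I.restrictScalars k) (v := x) hxI
  obtain ⟨a, hfa⟩ := h.exists_forall_apply_eq_mul_left f
  obtain ⟨u, rfl⟩ : IsUnit a := by
    by_contra ha
    exact hfx ((hfa x).trans (hx a ha))
  refine hI (h I fun y hy ↦ ?_)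
  calc lam y = f (↑u⁻¹ * y) := by rw [hfa, Units.mul_inv_cancel_left]
    _ = 0 := hfI (I.mul_mem_left _ hy)

variable [IsLocalRing R]

theorem exists_apply_ne_zero_forall_nonunits (h : IsFrobeniusFunctional lam) :
    ∃ x, lam x ≠ 0 ∧ ∀ a ∈ nonunits R, lam (a * x) = 0 := by
  have one_notMem : (1 : R) ∉ nonunitsSubmodule k R := one_notMem_nonunits
  obtain ⟨f, hf_one, hf_nonunits⟩ := Submodule.exists_le_ker_of_notMem one_notMem
  obtain ⟨x, hfx⟩ := h.exists_forall_apply_eq_mul_right f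
  exact ⟨x, by rwa [hfx, one_mul] at hf_one, fun a ha ↦ (hfx a).symm.trans (hf_nonunits ha)⟩

theorem exists_apply_ne_zero_forall_mem_ideal (h : IsFrobeniusFunctional lam) :
    ∃ x, lam x ≠ 0 ∧ ∀ I : Ideal R, I ≠ ⊥ → x ∈ I :=
  let ⟨x, hx, hx_nonunits⟩ := h.exists_apply_ne_zero_forall_nonunits
  ⟨x, hx, fun _ ↦ h.mem_of_forall_nonunits hx_nonunits⟩

end IsFrobeniusFunctional

theorem local_nakayama_independent_of_field_general
    {k₁ k₂ R : Type*} [Field k₁] [Field k₂] [Ring R] [Algebra k₁ R] [Algebra k₂ R]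
    [FiniteDimensional k₁ R] [IsLocalRing R]
    {lam₁ : R →ₗ[k₁] k₁} (hlam₁ : IsFrobeniusFunctional lam₁)
    {σ : R → R} (hσ : ∀ r s, lam₁ (r * s) = lam₁ (s * σ r)) :
    ∃ lam₂ : R →ₗ[k₂] k₂,
      IsFrobeniusFunctional lam₂ ∧ ∀ r s, lam₂ (r * s) = lam₂ (s * σ r) := by
  obtain ⟨x, hx, hx_mem⟩ := hlam₁.exists_apply_ne_zero_forall_mem_ideal
  have hx_notMem : x ∉ twistedCommutatorSubmodule k₂ σ := fun hxC ↦
    hx (map_eq_zero_of_mem_twistedCommutatorSubmodule lam₁.toAddMonoidHom hσ hxC)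
  obtain ⟨lam₂, hlam₂x, hlam₂⟩ := Submodule.exists_le_ker_of_notMem hx_notMem
  exact ⟨lam₂, isFrobeniusFunctional_of_apply_ne_zero hlam₂x hx_mem,
    map_mul_eq_of_twistedCommutatorSubmodule_le_ker hlam₂⟩

/-- Let `R` be a local ring that is a finite-dimensional algebra over
fields `k₁` and `k₂`.  If `λ₁ : R → k₁` is a `k₁`-linear Frobenius functional (its kernel
contains no nonzero left ideals) with Nakayama automorphism `σ`, then there is a
`k₂`-linear Frobenius functional `λ₂ : R → k₂` with the same Nakayama automorphism `σ`. -/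
theorem local_nakayama_independent_of_field
    {k₁ k₂ R : Type*} [Field k₁] [Field k₂] [Ring R]
    [Algebra k₁ R] [Algebra k₂ R]
    [FiniteDimensional k₁ R] [FiniteDimensional k₂ R]
    [IsLocalRing R]
    (lam₁ : R →ₗ[k₁] k₁)
    (hlam₁ : ∀ I : Ideal R, (I : Set R) ⊆ {x | lam₁ x = 0} → I = ⊥)
    (σ : R ≃+* R) (hσ : ∀ r s : R, lam₁ (r * s) = lam₁ (s * σ r)) :
    ∃ lam₂ : R →ₗ[k₂] k₂,
      (∀ I : Ideal R, (I : Set R) ⊆ {x | lam₂ x = 0} → I = ⊥) ∧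
      (∀ r s : R, lam₂ (r * s) = lam₂ (s * σ r)) := by
  exact local_nakayama_independent_of_field_general hlam₁ hσ
end

section
/- Let V be a finite-dimensional vector space over a field k, let n be a positive integer such that k has at least n elements, and suppose V is the internal direct sum of subspaces V₁, ..., Vₙ. Let U be a subspace of V such that Vᵢ is not contained in U for each i = 1, ..., n. Then there exists a subspace U' of V of codimension 1 (a hyperplane) with U ⊆ U' and such that Vᵢ is not contained in U' for each i = 1, ..., n. -/
/-!
A hyperplane containing `U` is the kernel of a nonzero functional on `V ⧸ U`. Choosing `vᵢ ∈ Vᵢ`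
outside `U`, we need a functional on `V ⧸ U` that is nonzero at the class of every `vᵢ`. The
functionals vanishing at one such class form a proper subspace of the dual, so it suffices that a
vector space over `K` is never a union of at most `|K|` (finitely many) proper subspaces. This goes
by induction: if `x` avoids `p₁, …, pₘ` with `m < |K|` but lies in `q`, pick `y ∉ q`; the affine
line `{c • x + y}` misses `q` and meets each `pᵢ` in at most one point, so one of its `|K|` points
avoids everything.
-/

section Avoidance

variable {ι K M : Type*} [DivisionRing K] [AddCommGroup M] [Module K M]
  {s : Finset ι} {p : ι → Submodule K M}

theorem eq_of_smul_add_mem {q : Submodule K M} {x y : M} (hx : x ∉ q) {c d : K}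
    (hc : c • x + y ∈ q) (hd : d • x + y ∈ q) : c = d := by
  have hsub : (c - d) • x ∈ q := by
    simpa only [add_sub_add_right_eq_sub, ← sub_smul] using q.sub_mem hc hd
  by_contra hne
  exact hx ((q.smul_mem_iff (sub_ne_zero.2 hne)).1 hsub)

theorem exists_forall_smul_add_notMem (hs : s.card < ENat.card K) {x : M}
    (hx : ∀ i ∈ s, x ∉ p i) (y : M) : ∃ c : K, ∀ i ∈ s, c • x + y ∉ p i := by
  by_contra! hbad
  choose i his hip using hbad
  have hinj : Function.Injective fun c ↦ (⟨i c, his c⟩ : s) := fun c d hcd ↦ by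
    have hi : i c = i d := congrArg Subtype.val hcd
    exact eq_of_smul_add_mem (hx _ (his c)) (hip c) (hi ▸ hip d)
  have hle : ENat.card K ≤ s.card := by simpa using ENat.card_le_card_of_injective hinj
  exact hs.not_ge hle

theorem exists_forall_notMem_of_card_le (hs : s.card ≤ ENat.card K) (hp : ∀ i ∈ s, p i ≠ ⊤) :
    ∃ x, ∀ i ∈ s, x ∉ p i := by
  classical
  induction s using Finset.induction_on with
  | empty => exact ⟨0, by simp⟩
  | insert j s hj ih =>
    have hlt : s.card < ENat.card K :=
      lt_of_lt_of_le (by simp [Finset.card_insert_of_notMem hj, ENat.natCast_lt_succ]) hs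
    rw [Finset.forall_mem_insert] at hp
    simp only [Finset.forall_mem_insert]
    obtain ⟨x, hx⟩ := ih hlt.le hp.2
    by_cases hxj : x ∈ p j
    · obtain ⟨y, hy⟩ := SetLike.exists_not_mem_of_ne_top (p j) hp.1 rfl
      obtain ⟨c, hc⟩ := exists_forall_smul_add_notMem hlt hx y
      have hcj : c • x + y ∉ p j := by
        rwa [(p j).add_mem_iff_right ((p j).smul_mem c hxj)]
      exact ⟨c • x + y, hcj, hc⟩
    · exact ⟨x, hxj, hx⟩

end Avoidance

section Functionals

variable {ι K V : Type*} [DivisionRing K] [AddCommGroup V] [Module K V]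

-- Over a noncommutative `K` the functionals `V →ₗ[K] K` are a vector space over `Kᵐᵒᵖ`, not `K`.
theorem exists_linearMap_forall_apply_ne_zero [Finite ι] (hι : ENat.card ι ≤ ENat.card K)
    {v : ι → V} (hv : ∀ i, v i ≠ 0) : ∃ f : V →ₗ[K] K, ∀ i, f (v i) ≠ 0 := by
  have := Fintype.ofFinite ι
  let vanishing (i : ι) : Submodule Kᵐᵒᵖ (V →ₗ[K] K) :=
    LinearMap.ker (LinearMap.applyₗ' Kᵐᵒᵖ (v i))
  have hproper (i : ι) : vanishing i ≠ ⊤ := fun htop ↦ by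
    obtain ⟨f, hf, -⟩ :=
      Submodule.exists_le_ker_of_notMem (mt (Submodule.mem_bot K).1 (hv i))
    exact hf (htop ▸ Submodule.mem_top : f ∈ vanishing i)
  have hcard : (Finset.univ : Finset ι).card ≤ ENat.card Kᵐᵒᵖ := by
    rwa [Finset.card_univ, ← ENat.card_eq_coe_fintype_card,
      ← ENat.card_congr MulOpposite.opEquiv]
  obtain ⟨f, hf⟩ := exists_forall_notMem_of_card_le hcard fun i _ ↦ hproper i
  exact ⟨f, fun i ↦ hf i (Finset.mem_univ i)⟩

theorem finrank_quotient_ker_eq_one {f : V →ₗ[K] K} (hf : f ≠ 0) :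
    Module.finrank K (V ⧸ LinearMap.ker f) = 1 := by
  rw [(f.quotKerEquivOfSurjective (LinearMap.surjective hf)).finrank_eq, Module.finrank_self]

theorem extend_to_hyperplane_avoiding_summands_general [Finite ι] [Nonempty ι]
    (hι : ENat.card ι ≤ ENat.card K) (W : ι → Submodule K V) (U : Submodule K V)
    (hU : ∀ i, ¬ W i ≤ U) :
    ∃ U' : Submodule K V, U ≤ U' ∧ Module.finrank K (V ⧸ U') = 1 ∧ ∀ i, ¬ W i ≤ U' := by
  choose v hvW hvU using fun i ↦ SetLike.not_le_iff_exists.1 (hU i)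
  have hclass (i : ι) : U.mkQ (v i) ≠ 0 := mt (Submodule.Quotient.mk_eq_zero U).1 (hvU i)
  obtain ⟨g, hg⟩ := exists_linearMap_forall_apply_ne_zero hι hclass
  have hne : g ∘ₗ U.mkQ ≠ 0 := fun h ↦
    hg (Classical.arbitrary ι) (LinearMap.congr_fun h _)
  exact ⟨LinearMap.ker (g ∘ₗ U.mkQ), U.le_comap_mkQ (LinearMap.ker g),
    finrank_quotient_ker_eq_one hne, fun i hle ↦ hg i (hle (hvW i))⟩

end Functionals

/-- **Lemma on hyperplanes.** Let `V` be a finite-dimensional vector space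
over a field `k` with at least `n` elements, decomposed as an internal direct sum
`V = V₁ ⊕ ⋯ ⊕ Vₙ` with `n ≥ 1`.  If `U` is a subspace with `Vᵢ ⊄ U` for all `i`, then `U`
can be enlarged to a hyperplane `U'` (a subspace of codimension 1) with `Vᵢ ⊄ U'` for
all `i`. -/
theorem extend_to_hyperplane_avoiding_summands
    {k V : Type*} [Field k] [AddCommGroup V] [Module k V] [FiniteDimensional k V]
    (n : ℕ) (hn : 0 < n) (hcard : (n : Cardinal) ≤ Cardinal.mk k)
    (Vi : Fin n → Submodule k V)
    (hindep : iSupIndep Vi) (hsum : ⨆ i, Vi i = ⊤)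
    (U : Submodule k V) (hU : ∀ i, ¬ Vi i ≤ U) :
    ∃ U' : Submodule k V, U ≤ U' ∧ Module.finrank k (V ⧸ U') = 1 ∧
      ∀ i, ¬ Vi i ≤ U' := by
  have : Nonempty (Fin n) := ⟨⟨0, hn⟩⟩
  exact extend_to_hyperplane_avoiding_summands_general
    (by simpa [ENat.card] using hcard) Vi U hU
end

section
/- Let D be a division ring, n a positive integer, and S = Mₙ(D) the ring of n × n matrices over D. If I is any nonzero left ideal of S, then I + [S,S] = S; that is, every element of S is the sum of an element of I and an element of the additive subgroup generated by commutators. Equivalently, the additive subgroup of S generated by I together with all elements a*b − b*a (a, b ∈ S) is all of S. -/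
/-!
Modulo commutators `x * r` agrees with `r * x`, so for a left ideal `I` of a ring `R` the subgroup
`I + [R, R]` contains the two-sided ideal generated by `I`. In a simple ring, such as a matrix ring
over a division ring, that two-sided ideal is everything as soon as `I ≠ 0`.
-/

section Ring

variable {R : Type*} [Ring R]

theorem mul_mem_closure_ideal_union_commutators (I : Ideal R) {x : R} (hx : x ∈ I) (r : R) :
    x * r ∈ AddSubgroup.closure ((I : Set R) ∪ {x | ∃ a b : R, x = a * b - b * a}) := by
  rw [← sub_add_cancel (x * r) (r * x)]
  exact add_mem (AddSubgroup.subset_closure (Or.inr ⟨x, r, rfl⟩))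
    (AddSubgroup.subset_closure (Or.inl (I.mul_mem_left r hx)))

theorem twoSidedIdeal_span_subset_closure_union_commutators (I : Ideal R) :
    (TwoSidedIdeal.span (I : Set R) : Set R) ⊆
      AddSubgroup.closure ((I : Set R) ∪ {x | ∃ a b : R, x = a * b - b * a}) := by
  intro y hy
  rw [SetLike.mem_coe, TwoSidedIdeal.mem_span_iff_mem_addSubgroup_closure] at hy
  refine (AddSubgroup.closure_le _).2 ?_ hy
  rintro _ ⟨_, ⟨s, -, x, hx, rfl⟩, r, -, rfl⟩
  exact mul_mem_closure_ideal_union_commutators I (I.mul_mem_left s hx) r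

theorem twoSidedIdeal_span_eq_top_of_ne_bot [IsSimpleRing R] {I : Ideal R} (hI : I ≠ ⊥) :
    TwoSidedIdeal.span (I : Set R) = ⊤ := by
  refine (eq_bot_or_eq_top _).resolve_left fun hspan => hI ?_
  rw [← le_bot_iff, TwoSidedIdeal.span_le] at hspan
  exact le_bot_iff.1 hspan

theorem nonzero_left_ideal_sup_commutators_eq_top_general [IsSimpleRing R]
    (I : Ideal R) (hI : I ≠ ⊥) :
    AddSubgroup.closure ((I : Set R) ∪ {x | ∃ a b : R, x = a * b - b * a}) = ⊤ := by
  refine eq_top_iff.2 fun y _ => twoSidedIdeal_span_subset_closure_union_commutators I ?_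
  rw [twoSidedIdeal_span_eq_top_of_ne_bot hI]
  trivial

end Ring

/-- **Lemma on matrix rings.** Let `D` be a division ring, `n ≥ 1`, and
`S = Mₙ(D)`.  For every nonzero left ideal `I` of `S` one has `I + [S,S] = S`:
the additive subgroup generated by `I` together with all commutators `a*b - b*a`
is all of `S`. -/
theorem nonzero_left_ideal_sup_commutators_eq_top
    {D : Type*} [DivisionRing D] {n : ℕ} (hn : 0 < n)
    (I : Ideal (Matrix (Fin n) (Fin n) D)) (hI : I ≠ ⊥) :
    AddSubgroup.closure
        ((I : Set (Matrix (Fin n) (Fin n) D)) ∪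
          {x | ∃ a b : Matrix (Fin n) (Fin n) D, x = a * b - b * a}) = ⊤ := by
  have : Nonempty (Fin n) := Fin.pos_iff_nonempty.1 hn
  exact nonzero_left_ideal_sup_commutators_eq_top_general I hI
end

section
/- Let R be a ring that is a finite-dimensional algebra over a field k₁ and also a finite-dimensional algebra over a field k₂, where both k₁ and k₂ are infinite. Let λ₁ : R → k₁ be a k₁-linear functional whose kernel contains no nonzero left ideals of R, and let σ : R → R be a ring automorphism satisfying λ₁(r*s) = λ₁(s * σ(r)) for all r, s ∈ R. Then there exists a k₂-linear functional λ₂ : R → k₂ whose kernel contains no nonzero left ideals of R and which satisfies λ₂(r*s) = λ₂(s * σ(r)) for all r, s ∈ R. -/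
/-!
Let `Z` be the center of `R`; it contains the images of both ground fields. Both the Frobenius and
the Nakayama condition on a functional `l` say that certain `Z`-submodules of `R` do or do not lie
in `ker l`, so it suffices to find a `k₂`-linear functional whose kernel has the same largest
`Z`-submodule `N` as the kernel of `lam₁`.

On `Q = R ⧸ N` the functional `lam₁` induces one whose kernel contains no nonzero `Z`-submodule.
By finite-dimensional duality over `k₁`, every `Z`-linear map from a submodule of `Q` to `Q` is then
multiplication by an element of `Z`, so distinct simple submodules of `Q` are not isomorphic. This
condition no longer mentions `k₁`, and it makes the simple submodules of `Q` independent. A nonzero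
vector from each of them gives a `k₂`-linearly independent family; a `k₂`-linear functional equal
to `1` on this family has no simple submodule, hence no nonzero submodule, in its kernel.
-/

section KerCore

variable {k Z M V : Type*} [Semiring k] [Semiring Z] [AddCommMonoid M] [AddCommMonoid V]
  [Module k M] [Module k V] [Module Z M]

variable (Z) in
/-- The largest `Z`-submodule contained in the kernel of `l`, where `l` is linear over another
ring `k`. For `Z` central in a ring, it captures which left ideals and which twisted commutators
a functional annihilates. -/
def kerCore (l : M →ₗ[k] V) : Submodule Z M where
  carrier := {x | ∀ z : Z, l (z • x) = 0}
  add_mem' hx hy z := by rw [smul_add, map_add, hx z, hy z, add_zero]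
  zero_mem' z := by rw [smul_zero, map_zero]
  smul_mem' c x hx z := by rw [smul_smul]; exact hx (z * c)

theorem mem_kerCore {l : M →ₗ[k] V} {x : M} : x ∈ kerCore Z l ↔ ∀ z : Z, l (z • x) = 0 :=
  Iff.rfl

theorem apply_eq_zero_of_mem_kerCore {l : M →ₗ[k] V} {x : M} (hx : x ∈ kerCore Z l) :
    l x = 0 := by
  simpa only [one_smul] using hx 1

theorem le_kerCore_iff {l : M →ₗ[k] V} {S : Submodule Z M} :
    S ≤ kerCore Z l ↔ ∀ x ∈ S, l x = 0 :=
  ⟨fun h _ hx ↦ apply_eq_zero_of_mem_kerCore (h hx), fun h x hx z ↦ h (z • x) (S.smul_mem z hx)⟩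

theorem kerCore_comp_restrictScalars {N : Type*} [AddCommMonoid N] [Module k N] [Module Z N]
    [LinearMap.CompatibleSMul N M k Z] (l : M →ₗ[k] V) (f : N →ₗ[Z] M) :
    kerCore Z (l ∘ₗ f.restrictScalars k) = (kerCore Z l).comap f := by
  ext x
  simp only [mem_kerCore, Submodule.mem_comap, LinearMap.comp_apply,
    LinearMap.restrictScalars_apply, map_smul]

end KerCore

section Duality

variable {k Z M : Type*} [Field k] [CommRing Z] [Algebra k Z] [AddCommGroup M] [Module k M]
  [Module Z M] [IsScalarTower k Z M] {l : M →ₗ[k] k}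

theorem exists_forall_eq_apply_smul_of_kerCore_eq_bot [FiniteDimensional k M]
    (hl : kerCore Z l = ⊥) (f : M →ₗ[k] k) : ∃ c : Z, ∀ x, f x = l (c • x) := by
  let B : Z →ₗ[k] Module.Dual k M := (Algebra.lsmul k k M).toLinearMap.compr₂ l
  have ker_flip : LinearMap.ker B.flip = ⊥ := by
    refine (Submodule.eq_bot_iff _).2 fun x hx ↦ ?_
    have hx' : x ∈ kerCore Z l := fun z ↦ LinearMap.congr_fun hx z
    rwa [hl, Submodule.mem_bot] at hx'
  have range_eq_top : LinearMap.range B = ⊤ := by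
    rw [← Subspace.dualCoannihilator_dualAnnihilator_eq (W := LinearMap.range B),
      LinearMap.dualCoannihilator_range_eq_ker_flip, ker_flip, Submodule.dualAnnihilator_bot]
  obtain ⟨c, hc⟩ := LinearMap.range_eq_top.1 range_eq_top f
  exact ⟨c, fun x ↦ (LinearMap.congr_fun hc x).symm⟩

theorem exists_forall_eq_smul_of_kerCore_eq_bot (hl : kerCore Z l = ⊥) {S : Submodule Z M}
    [FiniteDimensional k S] (φ : S →ₗ[Z] M) : ∃ c : Z, ∀ s : S, φ s = c • (s : M) := by
  have hlS : kerCore Z (l ∘ₗ S.subtype.restrictScalars k) = ⊥ := by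
    rw [kerCore_comp_restrictScalars, hl, ← LinearMap.ker, S.ker_subtype]
  obtain ⟨c, hc⟩ :=
    exists_forall_eq_apply_smul_of_kerCore_eq_bot hlS (l ∘ₗ φ.restrictScalars k)
  refine ⟨c, fun s ↦ sub_eq_zero.1 ?_⟩
  have hmem : φ s - c • (s : M) ∈ kerCore Z l := fun z ↦ by
    have hz : l (φ (z • s)) = l (c • z • (s : M)) := hc (z • s)
    rw [smul_sub, map_sub, smul_comm z c, ← hz, φ.map_smul, sub_self]
  rwa [hl, Submodule.mem_bot] at hmem

theorem le_of_linearEquiv_of_kerCore_eq_bot (hl : kerCore Z l = ⊥) {S T : Submodule Z M}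
    [FiniteDimensional k S] (e : S ≃ₗ[Z] T) : T ≤ S := by
  obtain ⟨c, hc⟩ := exists_forall_eq_smul_of_kerCore_eq_bot hl (T.subtype ∘ₗ e.toLinearMap)
  intro t ht
  have ht_eq : t = c • (e.symm ⟨t, ht⟩ : M) := by simpa using hc (e.symm ⟨t, ht⟩)
  rw [ht_eq]
  exact S.smul_mem c (e.symm ⟨t, ht⟩).2

theorem eq_of_linearEquiv_of_kerCore_eq_bot (hl : kerCore Z l = ⊥) {S T : Submodule Z M}
    [FiniteDimensional k S] (e : S ≃ₗ[Z] T) : S = T := by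
  have : FiniteDimensional k T := Module.Finite.equiv (e.restrictScalars k)
  exact le_antisymm (le_of_linearEquiv_of_kerCore_eq_bot hl e.symm)
    (le_of_linearEquiv_of_kerCore_eq_bot hl e)

end Duality

theorem iSupIndep_isAtom_of_linearEquiv_imp_eq {A M : Type*} [Ring A] [AddCommGroup M]
    [Module A M]
    (h : ∀ S T : Submodule A M, IsAtom S → IsAtom T → Nonempty (S ≃ₗ[A] T) → S = T) :
    iSupIndep fun S : {S : Submodule A M // IsAtom S} ↦ (S : Submodule A M) := by
  have simple (S : {S : Submodule A M // IsAtom S}) : IsSimpleModule A S.1 :=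
    isSimpleModule_iff_isAtom.2 S.2
  let component (S : {S : Submodule A M // IsAtom S}) : isotypicComponents A M :=
    ⟨isotypicComponent A M S.1, S.1, simple S, rfl⟩
  have component_injective : Function.Injective component := fun S T hST ↦ by
    have hle : S.1 ≤ isotypicComponent A M T.1 :=
      S.1.le_isotypicComponent.trans_eq (congrArg Subtype.val hST)
    exact Subtype.ext <| h S T S.2 T.2 <|
      isIsotypicOfType_submodule_iff.1 (.isotypicComponent A M T.1) S.1 hle
  exact (((sSupIndep_iff _).1 (sSupIndep_isotypicComponents A M)).comp component_injective).mono
    fun S ↦ S.1.le_isotypicComponent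

theorem iSupIndep_restrictScalars {ι k A M : Type*} [Ring k] [Ring A] [AddCommGroup M]
    [Module k M] [Module A M] [SMul k A] [IsScalarTower k A M] {p : ι → Submodule A M}
    (hp : iSupIndep p) : iSupIndep fun i ↦ (p i).restrictScalars k :=
  (iSupIndep_iff_finsetSum_eq_zero_imp_eq_zero _).2
    ((iSupIndep_iff_finsetSum_eq_zero_imp_eq_zero p).1 hp)

theorem exists_linearMap_forall_apply_eq_one {ι k V : Type*} [DivisionRing k] [AddCommGroup V]
    [Module k V] {v : ι → V} (hv : LinearIndependent k v) : ∃ f : V →ₗ[k] k, ∀ i, f (v i) = 1 := by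
  obtain ⟨g, hg⟩ :=
    (Finsupp.linearCombination k v).exists_leftInverse_of_injective (LinearMap.ker_eq_bot.2 hv)
  refine ⟨Finsupp.linearCombination k (fun _ ↦ 1) ∘ₗ g, fun i ↦ ?_⟩
  have hgi : g (v i) = Finsupp.single i 1 := by
    simpa using LinearMap.congr_fun hg (Finsupp.single i 1)
  rw [LinearMap.comp_apply, hgi, Finsupp.linearCombination_single, one_smul]

theorem exists_kerCore_eq_bot_of_iSupIndep_isAtom {k Z M : Type*} [DivisionRing k] [Ring Z]
    [AddCommGroup M] [Module k M] [Module Z M] [SMul k Z] [IsScalarTower k Z M]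
    [IsAtomic (Submodule Z M)]
    (h : iSupIndep fun S : {S : Submodule Z M // IsAtom S} ↦ (S : Submodule Z M)) :
    ∃ m : M →ₗ[k] k, kerCore Z m = ⊥ := by
  choose v hv_mem hv_ne using
    fun S : {S : Submodule Z M // IsAtom S} ↦ S.1.exists_mem_ne_zero_of_ne_bot S.2.1
  have hv : LinearIndependent k v :=
    (iSupIndep_restrictScalars (k := k) h).linearIndependent _ hv_mem hv_ne
  obtain ⟨m, hm⟩ := exists_linearMap_forall_apply_eq_one hv
  refine ⟨m, (eq_bot_or_exists_atom_le _).resolve_right ?_⟩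
  rintro ⟨S, hS, hS_le⟩
  have hm_zero : m (v ⟨S, hS⟩) = 0 := le_kerCore_iff.1 hS_le _ (hv_mem ⟨S, hS⟩)
  exact one_ne_zero ((hm ⟨S, hS⟩).symm.trans hm_zero)

section Transfer

variable {k₁ Z M : Type*} (k₂ : Type*) [Field k₁] [DivisionRing k₂] [CommRing Z] [Algebra k₁ Z]
  [SMul k₂ Z] [AddCommGroup M] [Module k₁ M] [Module k₂ M] [Module Z M] [IsScalarTower k₁ Z M]
  [IsScalarTower k₂ Z M] [FiniteDimensional k₁ M]

theorem exists_kerCore_eq_bot_of_kerCore_eq_bot {l : M →ₗ[k₁] k₁} (hl : kerCore Z l = ⊥) :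
    ∃ m : M →ₗ[k₂] k₂, kerCore Z m = ⊥ := by
  have : IsArtinian Z M := isArtinian_of_tower k₁ inferInstance
  have (S : Submodule Z M) : FiniteDimensional k₁ S :=
    inferInstanceAs (FiniteDimensional k₁ (S.restrictScalars k₁))
  exact exists_kerCore_eq_bot_of_iSupIndep_isAtom <| iSupIndep_isAtom_of_linearEquiv_imp_eq
    fun _ _ _ _ ⟨e⟩ ↦ eq_of_linearEquiv_of_kerCore_eq_bot hl e

theorem exists_kerCore_eq (l : M →ₗ[k₁] k₁) : ∃ m : M →ₗ[k₂] k₂, kerCore Z m = kerCore Z l := by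
  let N := kerCore Z l
  let l' : M ⧸ N →ₗ[k₁] k₁ :=
    (N.restrictScalars k₁).liftQ l fun _ hx ↦ apply_eq_zero_of_mem_kerCore hx
  have hl' : kerCore Z l' = ⊥ := by
    refine (Submodule.eq_bot_iff _).2 fun x hx ↦ ?_
    obtain ⟨x, rfl⟩ := N.mkQ_surjective x
    exact (Submodule.Quotient.mk_eq_zero N).2 hx
  have : FiniteDimensional k₁ (M ⧸ N) :=
    Module.Finite.of_surjective (N.mkQ.restrictScalars k₁) N.mkQ_surjective
  obtain ⟨m, hm⟩ := exists_kerCore_eq_bot_of_kerCore_eq_bot k₂ hl'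
  refine ⟨m ∘ₗ N.mkQ.restrictScalars k₂, ?_⟩
  rw [kerCore_comp_restrictScalars, hm, ← LinearMap.ker, N.ker_mkQ]

end Transfer

theorem twisted_commutator_mem_kerCore {k Z R V : Type*} [Semiring k] [CommSemiring Z] [Ring R]
    [Algebra Z R] [AddCommGroup V] [Module k R] [Module k V] {l : R →ₗ[k] V} {σ : R → R}
    (hσ : ∀ r s, l (r * s) = l (s * σ r)) (r s : R) : r * s - s * σ r ∈ kerCore Z l := fun z ↦ by
  rw [smul_sub, map_sub, ← mul_smul_comm, hσ, smul_mul_assoc, sub_self]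

/-- The algebra structure on the center of a `k`-algebra, regarded as a subring so that its type
does not depend on `k`. -/
abbrev algebraCenter (k R : Type*) [CommSemiring k] [Ring R] [Algebra k R] :
    Algebra k (Subring.center R) :=
  ((algebraMap k R).codRestrict (Subring.center R) fun c ↦
    Subring.mem_center_iff.2 fun r ↦ (Algebra.commutes c r).symm).toAlgebra

theorem nakayama_independent_of_infinite_fields_general
    {k₁ k₂ R : Type*} [Field k₁] [Field k₂] [Ring R] [Algebra k₁ R] [Algebra k₂ R]
    [FiniteDimensional k₁ R] (lam₁ : R →ₗ[k₁] k₁)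
    (hlam₁ : ∀ I : Ideal R, (I : Set R) ⊆ {x | lam₁ x = 0} → I = ⊥)
    (σ : R → R) (hσ : ∀ r s : R, lam₁ (r * s) = lam₁ (s * σ r)) :
    ∃ lam₂ : R →ₗ[k₂] k₂,
      (∀ I : Ideal R, (I : Set R) ⊆ {x | lam₂ x = 0} → I = ⊥) ∧
      (∀ r s : R, lam₂ (r * s) = lam₂ (s * σ r)) := by
  let Z := Subring.center R
  let : Algebra k₁ Z := algebraCenter k₁ R
  let : Algebra k₂ Z := algebraCenter k₂ R
  have : IsScalarTower k₁ Z R := .of_algebraMap_eq fun _ ↦ rfl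
  have : IsScalarTower k₂ Z R := .of_algebraMap_eq fun _ ↦ rfl
  obtain ⟨lam₂, hcore⟩ := exists_kerCore_eq (Z := Z) k₂ lam₁
  refine ⟨lam₂, fun I hI ↦ hlam₁ I ?_, fun r s ↦ ?_⟩
  · have hI_le : I.restrictScalars Z ≤ kerCore Z lam₂ := le_kerCore_iff.2 hI
    rw [hcore] at hI_le
    exact fun x hx ↦ apply_eq_zero_of_mem_kerCore (hI_le hx)
  · have hmem : r * s - s * σ r ∈ kerCore Z lam₂ :=
      hcore ▸ twisted_commutator_mem_kerCore hσ r s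
    rw [← sub_eq_zero, ← map_sub]
    exact apply_eq_zero_of_mem_kerCore hmem

/-- **Theorem: Nakayama automorphism independent of the ground field.**
Let `R` be a ring that is a finite-dimensional algebra over infinite fields `k₁` and `k₂`.
If `λ₁ : R → k₁` is a `k₁`-linear Frobenius functional (its kernel contains no nonzero left
ideals) with Nakayama automorphism `σ`, then there is a `k₂`-linear Frobenius functional
`λ₂ : R → k₂` with the same Nakayama automorphism `σ`. -/
theorem nakayama_independent_of_infinite_fields
    {k₁ k₂ R : Type*} [Field k₁] [Field k₂] [Infinite k₁] [Infinite k₂] [Ring R]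
    [Algebra k₁ R] [Algebra k₂ R]
    [FiniteDimensional k₁ R] [FiniteDimensional k₂ R]
    (lam₁ : R →ₗ[k₁] k₁)
    (hlam₁ : ∀ I : Ideal R, (I : Set R) ⊆ {x | lam₁ x = 0} → I = ⊥)
    (σ : R ≃+* R) (hσ : ∀ r s : R, lam₁ (r * s) = lam₁ (s * σ r)) :
    ∃ lam₂ : R →ₗ[k₂] k₂,
      (∀ I : Ideal R, (I : Set R) ⊆ {x | lam₂ x = 0} → I = ⊥) ∧
      (∀ r s : R, lam₂ (r * s) = lam₂ (s * σ r)) :=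
  nakayama_independent_of_infinite_fields_general lam₁ hlam₁ σ hσ
end

section
/- Let R be a ring that is a finite-dimensional algebra over a field k₁ and also a finite-dimensional algebra over a field k₂. For i = 1, 2 let Fᵢ be the functor from the category of left R-modules to the category of right R-modules sending a left R-module X to its kᵢ-dual Hom_{kᵢ}(X, kᵢ) with right R-action (f·r)(x) = f(r•x), and sending an R-linear map g : X → Y to the precomposition map f ↦ f ∘ g. Then F₁ and F₂ are naturally isomorphic functors if and only if Hom_{k₁}(R, k₁) and Hom_{k₂}(R, k₂) are isomorphic as (R,R)-bimodules, where the bimodule actions on Hom_{k}(R, k) are given by (r·f)(s) = f(s*r) and (f·r)(s) = f(r*s). -/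
universe u

/-- The right `R`-action on the `k`-dual of a left `R`-module `X`:
`(f · r) x = f (r • x)`. -/
def dualSMul (k R X : Type*) [Field k] [Ring R] [Algebra k R]
    [AddCommGroup X] [Module R X] [Module k X] [IsScalarTower k R X]
    (r : R) (f : X →ₗ[k] k) : X →ₗ[k] k where
  toFun x := f (r • x)
  map_add' x y := by show f (r • (x + y)) = f (r • x) + f (r • y); rw [smul_add, map_add]
  map_smul' c x := by
    show f (r • c • x) = c • f (r • x)
    rw [smul_comm r c x, map_smul, smul_eq_mul]

/-!
Tensor-hom adjunction gives `Hom_k(X, N) ≅ Hom_R(X, Hom_k(R, N))`, sending `φ` to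
`x ↦ (s ↦ φ (s • x))`: the functor `Hom_k(-, N)` on left `R`-modules is represented by the left
`R`-module `Hom_k(R, N)`. An isomorphism of representing objects therefore induces a natural
isomorphism, and compatibility with the other action on `Hom_k(R, N)` is exactly what makes it
right `R`-equivariant. Conversely, a natural isomorphism is evaluated at `X = R`, where naturality
along the right multiplications of `R` is left `R`-linearity.
-/

section Coinduced

/-- The left `R`-module structure `(r • f) s = f (s * r)` on `Hom_k(R, N)`, making it the
`R`-module coinduced from `N`. It is only a local instance, since for `R` acting on `N` there is
also the pointwise action on `Hom_k(R, N)`. -/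
abbrev coinducedModule {k R N : Type*} [CommSemiring k] [Semiring R] [Algebra k R]
    [AddCommMonoid N] [Module k N] : Module R (R →ₗ[k] N) where
  smul r f := f ∘ₗ LinearMap.mulRight k r
  one_smul f := LinearMap.ext fun s => congrArg f (mul_one s)
  mul_smul r r' f := LinearMap.ext fun s => congrArg f (mul_assoc s r r').symm
  smul_zero _ := rfl
  smul_add _ _ _ := rfl
  add_smul r r' f := LinearMap.ext fun s => (congrArg f (mul_add s r r')).trans (map_add f _ _)
  zero_smul f := LinearMap.ext fun s => (congrArg f (mul_zero s)).trans (map_zero f)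

attribute [local instance] coinducedModule

section Adjunction

variable {k R X Y N : Type*} [CommSemiring k] [Semiring R] [Algebra k R]
  [AddCommMonoid N] [Module k N]
  [AddCommMonoid X] [Module R X] [Module k X] [IsScalarTower k R X]
  [AddCommMonoid Y] [Module R Y] [Module k Y] [IsScalarTower k R Y]

theorem coinduced_smul_apply (r s : R) (f : R →ₗ[k] N) : (r • f) s = f (s * r) := rfl

/-- The adjunction between restriction of scalars along `k → R` and coinduction: `φ` corresponds
to `x ↦ (s ↦ φ (s • x))`, and `u` to `x ↦ u x 1`. -/
def homEquivCoinduced : (X →ₗ[k] N) ≃+ (X →ₗ[R] R →ₗ[k] N) where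
  toFun φ :=
    { toFun x := φ ∘ₗ (LinearMap.toSpanSingleton R X x).restrictScalars k
      map_add' x y := by ext s; simp
      map_smul' r x := by ext s; simp [coinduced_smul_apply, mul_smul] }
  invFun u :=
    { toFun x := u x 1
      map_add' x y := by simp
      map_smul' c x := by
        rw [← algebraMap_smul R c x, map_smul, coinduced_smul_apply, one_mul,
          Algebra.algebraMap_eq_smul_one, map_smul, RingHom.id_apply] }
  left_inv φ := by ext x; simp
  right_inv u := by ext x s; simp [coinduced_smul_apply]
  map_add' φ ψ := by ext x s; simp

theorem homEquivCoinduced_apply_apply (φ : X →ₗ[k] N) (x : X) (s : R) :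
    homEquivCoinduced φ x s = φ (s • x) := rfl

theorem homEquivCoinduced_comp_restrictScalars (φ : Y →ₗ[k] N) (g : X →ₗ[R] Y) :
    homEquivCoinduced (φ ∘ₗ g.restrictScalars k) = homEquivCoinduced φ ∘ₗ g := by
  ext x s
  simp [homEquivCoinduced_apply_apply]

theorem homEquivCoinduced_comp_lsmul_apply (φ : X →ₗ[k] N) (r : R) (x : X) :
    homEquivCoinduced (φ ∘ₗ Algebra.lsmul k k X r) x =
      homEquivCoinduced φ x ∘ₗ LinearMap.mulLeft k r := by
  ext s
  simp [homEquivCoinduced_apply_apply, mul_smul]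

end Adjunction

section Congr

variable {k₁ k₂ R X Y N₁ N₂ : Type*} [CommSemiring k₁] [CommSemiring k₂] [Semiring R]
  [Algebra k₁ R] [Algebra k₂ R]
  [AddCommMonoid N₁] [Module k₁ N₁] [AddCommMonoid N₂] [Module k₂ N₂]
  [AddCommMonoid X] [Module R X] [Module k₁ X] [Module k₂ X]
  [IsScalarTower k₁ R X] [IsScalarTower k₂ R X]
  [AddCommMonoid Y] [Module R Y] [Module k₁ Y] [Module k₂ Y]
  [IsScalarTower k₁ R Y] [IsScalarTower k₂ R Y]

/-- The isomorphism `Hom_{k₁}(X, N₁) ≅ Hom_{k₂}(X, N₂)` induced by an isomorphism `e` of the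
coinduced modules that represent the two functors. -/
def homCongrOfCoinduced (e : (R →ₗ[k₁] N₁) ≃ₗ[R] (R →ₗ[k₂] N₂)) :
    (X →ₗ[k₁] N₁) ≃+ (X →ₗ[k₂] N₂) :=
  (homEquivCoinduced.trans ((LinearEquiv.refl R X).arrowCongrAddEquiv e)).trans
    homEquivCoinduced.symm

variable (e : (R →ₗ[k₁] N₁) ≃ₗ[R] (R →ₗ[k₂] N₂))

theorem homEquivCoinduced_homCongrOfCoinduced (φ : X →ₗ[k₁] N₁) :
    homEquivCoinduced (homCongrOfCoinduced e φ) = e.toLinearMap ∘ₗ homEquivCoinduced φ :=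
  homEquivCoinduced.apply_symm_apply _

theorem homCongrOfCoinduced_comp_restrictScalars (φ : Y →ₗ[k₁] N₁) (g : X →ₗ[R] Y) :
    homCongrOfCoinduced e (φ ∘ₗ g.restrictScalars k₁) =
      homCongrOfCoinduced e φ ∘ₗ g.restrictScalars k₂ := by
  apply (homEquivCoinduced (R := R)).injective
  simp only [homEquivCoinduced_homCongrOfCoinduced, homEquivCoinduced_comp_restrictScalars,
    LinearMap.comp_assoc]

theorem homCongrOfCoinduced_comp_lsmul
    (he : ∀ (f : R →ₗ[k₁] N₁) (r : R),
      e (f ∘ₗ LinearMap.mulLeft k₁ r) = e f ∘ₗ LinearMap.mulLeft k₂ r)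
    (φ : X →ₗ[k₁] N₁) (r : R) :
    homCongrOfCoinduced e (φ ∘ₗ Algebra.lsmul k₁ k₁ X r) =
      homCongrOfCoinduced e φ ∘ₗ Algebra.lsmul k₂ k₂ X r := by
  apply (homEquivCoinduced (R := R)).injective
  ext1 x
  simp only [homEquivCoinduced_homCongrOfCoinduced, homEquivCoinduced_comp_lsmul_apply,
    LinearMap.comp_apply, LinearEquiv.coe_coe, he]

end Congr

theorem dual_functors_naturally_isomorphic_iff_bimodule_iso_general
    {k₁ k₂ N₁ N₂ : Type*} {R : Type u} [CommSemiring k₁] [CommSemiring k₂] [Ring R]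
    [Algebra k₁ R] [Algebra k₂ R]
    [AddCommMonoid N₁] [Module k₁ N₁] [AddCommMonoid N₂] [Module k₂ N₂] :
    (∃ e : ∀ (X : Type u) [AddCommGroup X] [Module R X] [Module k₁ X] [Module k₂ X]
        [IsScalarTower k₁ R X] [IsScalarTower k₂ R X], (X →ₗ[k₁] N₁) ≃+ (X →ₗ[k₂] N₂),
      (∀ (X : Type u) [AddCommGroup X] [Module R X] [Module k₁ X] [Module k₂ X]
          [IsScalarTower k₁ R X] [IsScalarTower k₂ R X] (f : X →ₗ[k₁] N₁) (r : R),
        e X (f ∘ₗ Algebra.lsmul k₁ k₁ X r) = e X f ∘ₗ Algebra.lsmul k₂ k₂ X r) ∧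
      (∀ (X Y : Type u) [AddCommGroup X] [Module R X] [Module k₁ X] [Module k₂ X]
          [IsScalarTower k₁ R X] [IsScalarTower k₂ R X]
          [AddCommGroup Y] [Module R Y] [Module k₁ Y] [Module k₂ Y]
          [IsScalarTower k₁ R Y] [IsScalarTower k₂ R Y]
          (g : X →ₗ[R] Y) (f : Y →ₗ[k₁] N₁),
        e X (f ∘ₗ g.restrictScalars k₁) = e Y f ∘ₗ g.restrictScalars k₂)) ↔
    (∃ e : (R →ₗ[k₁] N₁) ≃+ (R →ₗ[k₂] N₂),
      (∀ (f : R →ₗ[k₁] N₁) (r : R),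
        e (f ∘ₗ LinearMap.mulRight k₁ r) = e f ∘ₗ LinearMap.mulRight k₂ r) ∧
      (∀ (f : R →ₗ[k₁] N₁) (r : R),
        e (f ∘ₗ LinearMap.mulLeft k₁ r) = e f ∘ₗ LinearMap.mulLeft k₂ r)) := by
  constructor
  · rintro ⟨e, e_equivariant, e_natural⟩
    exact ⟨e R, fun f r => e_natural R R (LinearMap.toSpanSingleton R R r) f, e_equivariant R⟩
  · rintro ⟨e, e_mulRight, e_mulLeft⟩
    let eLin : (R →ₗ[k₁] N₁) ≃ₗ[R] (R →ₗ[k₂] N₂) := e.toLinearEquiv fun r f => e_mulRight f r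
    exact ⟨fun X => homCongrOfCoinduced eLin,
      fun X => homCongrOfCoinduced_comp_lsmul eLin e_mulLeft,
      fun X Y _ _ _ _ _ _ _ _ _ _ _ _ g f => homCongrOfCoinduced_comp_restrictScalars eLin f g⟩

end Coinduced

/-- Let `R` be a ring that is a finite-dimensional algebra over fields
`k₁` and `k₂`.  The `k₁`-dual functor and the `k₂`-dual functor from left `R`-modules to
right `R`-modules are naturally isomorphic iff `Hom_{k₁}(R,k₁) ≅ Hom_{k₂}(R,k₂)` as
`(R,R)`-bimodules.

A natural isomorphism is encoded as a family of additive bijections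
`e X : Hom_{k₁}(X,k₁) ≃+ Hom_{k₂}(X,k₂)`, right `R`-equivariant
(`e X (f·r) = (e X f)·r`, where `(f·r) x = f (r • x)`), and natural in `X`
(for every `R`-linear `g : X → Y`, `e X (f ∘ g) = (e Y f) ∘ g`).

A bimodule isomorphism of the duals of `R` is an additive bijection
`e : Hom_{k₁}(R,k₁) ≃+ Hom_{k₂}(R,k₂)` with `e (r·f) = r·(e f)` and `e (f·r) = (e f)·r`,
where `(r·f) s = f (s*r)` and `(f·r) s = f (r*s)`. -/
theorem dual_functors_naturally_isomorphic_iff_bimodule_iso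
    {k₁ k₂ R : Type u} [Field k₁] [Field k₂] [Ring R]
    [Algebra k₁ R] [Algebra k₂ R]
    [FiniteDimensional k₁ R] [FiniteDimensional k₂ R] :
    (∃ e : ∀ (X : Type u) [AddCommGroup X] [Module R X] [Module k₁ X] [Module k₂ X]
        [IsScalarTower k₁ R X] [IsScalarTower k₂ R X], (X →ₗ[k₁] k₁) ≃+ (X →ₗ[k₂] k₂),
      (∀ (X : Type u) [AddCommGroup X] [Module R X] [Module k₁ X] [Module k₂ X]
          [IsScalarTower k₁ R X] [IsScalarTower k₂ R X] (f : X →ₗ[k₁] k₁) (r : R),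
        e X (dualSMul k₁ R X r f) = dualSMul k₂ R X r (e X f)) ∧
      (∀ (X Y : Type u) [AddCommGroup X] [Module R X] [Module k₁ X] [Module k₂ X]
          [IsScalarTower k₁ R X] [IsScalarTower k₂ R X]
          [AddCommGroup Y] [Module R Y] [Module k₁ Y] [Module k₂ Y]
          [IsScalarTower k₁ R Y] [IsScalarTower k₂ R Y]
          (g : X →ₗ[R] Y) (f : Y →ₗ[k₁] k₁),
        e X (f.comp (g.restrictScalars k₁)) = (e Y f).comp (g.restrictScalars k₂))) ↔
    (∃ e : (R →ₗ[k₁] k₁) ≃+ (R →ₗ[k₂] k₂),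
      (∀ (f : R →ₗ[k₁] k₁) (r : R),
        e (f.comp (LinearMap.mulRight k₁ r)) = (e f).comp (LinearMap.mulRight k₂ r)) ∧
      (∀ (f : R →ₗ[k₁] k₁) (r : R),
        e (f.comp (LinearMap.mulLeft k₁ r)) = (e f).comp (LinearMap.mulLeft k₂ r))) :=
  dual_functors_naturally_isomorphic_iff_bimodule_iso_general
end

section
/- Let R be a ring that is a finite-dimensional algebra over infinite fields k₁ and k₂, and suppose R is a Frobenius k₁-algebra, i.e., there exists a k₁-linear functional λ₁ : R → k₁ whose kernel contains no nonzero left ideals of R. Then for every left R-module X there exists an additive bijection e : Hom_{k₁}(X, k₁) → Hom_{k₂}(X, k₂) that is right R-equivariant: for all f ∈ Hom_{k₁}(X, k₁), r ∈ R, and x ∈ X, e(f · r)(x) = (e f)(r • x), where the right R-action on each dual is (f · r)(x) = f(r • x); that is, the k₁-dual and the k₂-dual of X are isomorphic as right R-modules. -/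
universe u v

/-!
Let `Z` be the center of `R`. Every `k`-linear functional `f` on an `R`-module `X` gives a
`Z`-linear map `x ↦ (z ↦ f (z • x))` from `X` to `D k := Hom_k(Z, k)`, and `f` is recovered by
evaluation at `1`; so `Hom_k(X, k) ≃ Hom_Z(X, D k)`, naturally in the `Z`-module `X`. It remains to
show that the `Z`-module `D k` does not depend on `k`. Finite-dimensionality makes `Z` Artinian and
gives `D k` an essential socle containing each simple `Z`-module exactly once. Vectors spanning the
distinct simple submodules are linearly independent over `k'`, so some `k'`-linear functional on
`D k` vanishes at none of them. The corresponding `Z`-linear map `D k → D k'` is injective on the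
socle, hence injective, and by symmetry and finite length the two modules are isomorphic.
-/

section Torsion

open Ideal

variable {Z M : Type*} [CommRing Z] [AddCommGroup M] [Module Z M]

theorem exists_mem_isMaximal_torsionOf_of_ne_bot [IsArtinianRing Z] {N : Submodule Z M}
    (hN : N ≠ ⊥) : ∃ w ∈ N, (torsionOf Z M w).IsMaximal := by
  have : Nontrivial N := Submodule.nontrivial_iff_ne_bot.2 hN
  obtain ⟨p, hp⟩ := associatedPrimes.nonempty Z N
  obtain ⟨hprime, w, hw⟩ := isAssociatedPrime_iff.1 hp
  have hpw : p = torsionOf Z M (w : M) := by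
    ext z
    simp [hw, Submodule.mem_colon_singleton, Subtype.ext_iff]
  exact ⟨w, w.2, hpw ▸ inferInstance⟩

theorem linearIndependent_of_isPrime_torsionOf (K : Type*) [DivisionRing K] [Module K M]
    [SMulCommClass K Z M] {ι : Type*} {v : ι → M} (hprime : ∀ i, (torsionOf Z M (v i)).IsPrime)
    (hle : Pairwise fun i j ↦ ¬ torsionOf Z M (v i) ≤ torsionOf Z M (v j)) :
    LinearIndependent K v := by
  classical
  refine linearIndependent_iff'.2 fun s c hsum j hj ↦ ?_
  obtain ⟨z, hz, hzj⟩ : ∃ z ∈ (s.erase j).inf fun i ↦ torsionOf Z M (v i),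
      z ∉ torsionOf Z M (v j) := by
    refine SetLike.not_le_iff_exists.1 fun h ↦ ?_
    obtain ⟨i, hi, hij⟩ := (hprime j).inf_le'.1 h
    exact hle (Finset.ne_of_mem_erase hi) hij
  have hz_kills : ∀ i ∈ s, i ≠ j → z • c i • v i = 0 := fun i hi hij ↦ by
    have hle_i := Finset.inf_le (f := fun i ↦ torsionOf Z M (v i)) (Finset.mem_erase.2 ⟨hij, hi⟩)
    have hzi : z • v i = 0 := hle_i hz
    rw [← smul_comm, hzi, smul_zero]
  have hcj : c j • z • v j = 0 := by
    rw [smul_comm, ← Finset.sum_eq_single_of_mem j hj hz_kills, ← Finset.smul_sum, hsum, smul_zero]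
  exact (smul_eq_zero.1 hcj).resolve_right hzj

end Torsion

theorem exists_linearMap_forall_apply_eq {K V W ι : Type*} [DivisionRing K] [AddCommGroup V]
    [Module K V] [AddCommGroup W] [Module K W] {v : ι → V} (hv : LinearIndependent K v)
    (c : ι → W) : ∃ l : V →ₗ[K] W, ∀ i, l (v i) = c i := by
  let b := Module.Basis.span hv
  obtain ⟨l, hl⟩ := (b.constr ℕ c).exists_extend
  refine ⟨l, fun i ↦ ?_⟩
  calc l (v i) = l (b i) := by rw [Module.Basis.span_apply hv i]
    _ = b.constr ℕ c (b i) := LinearMap.congr_fun hl (b i)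
    _ = c i := b.constr_basis ℕ c i

theorem nonempty_linearEquiv_of_injective_of_injective {Z M N : Type*} [Ring Z] [AddCommGroup M]
    [Module Z M] [AddCommGroup N] [Module Z N] [IsArtinian Z N] {φ : M →ₗ[Z] N} {ψ : N →ₗ[Z] M}
    (hφ : Function.Injective φ) (hψ : Function.Injective ψ) : Nonempty (M ≃ₗ[Z] N) := by
  have hsurj : Function.Surjective (φ ∘ₗ ψ) :=
    IsArtinian.surjective_of_injective_endomorphism _ (hφ.comp hψ)
  exact ⟨LinearEquiv.ofBijective φ ⟨hφ, Function.Surjective.of_comp (g := ψ) hsurj⟩⟩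

/-- The `k`-dual `Hom_k(Z, k)` of a commutative `k`-algebra `Z`, on which `Z`, and hence any ring of
scalars of `Z`, acts by `(a • f) z = f (a • z)`. It is a type synonym because `Z →ₗ[k] k` carries
the action of `k` on the values of functionals as its default module structure. -/
def RegularDual (k Z : Type*) [Field k] [CommRing Z] [Algebra k Z] : Type _ := Z →ₗ[k] k

namespace RegularDual

open Ideal

section Module

variable {k Z : Type*} [Field k] [CommRing Z] [Algebra k Z]

instance : AddCommGroup (RegularDual k Z) := inferInstanceAs (AddCommGroup (Z →ₗ[k] k))

instance : FunLike (RegularDual k Z) Z k := inferInstanceAs (FunLike (Z →ₗ[k] k) Z k)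

instance : LinearMapClass (RegularDual k Z) k Z k :=
  inferInstanceAs (LinearMapClass (Z →ₗ[k] k) k Z k)

@[ext]
theorem ext {f g : RegularDual k Z} (h : ∀ z, f z = g z) : f = g := DFunLike.ext _ _ h

@[simp]
theorem zero_apply (z : Z) : (0 : RegularDual k Z) z = 0 := rfl

@[simp]
theorem add_apply (f g : RegularDual k Z) (z : Z) : (f + g) z = f z + g z := rfl

variable {A : Type*} [CommRing A] [Algebra A Z]

instance : SMul A (RegularDual k Z) where
  smul a f := LinearMap.comp (M₃ := k) f (LinearMap.mulLeft k (algebraMap A Z a))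

theorem smul_apply (a : A) (f : RegularDual k Z) (z : Z) : (a • f) z = f (a • z) :=
  congrArg f (Algebra.smul_def a z).symm

instance : Module A (RegularDual k Z) where
  one_smul f := by ext z; simp [smul_apply]
  mul_smul a b f := by ext z; simp only [smul_apply, mul_comm a b, mul_smul]
  smul_zero a := by ext z; simp [smul_apply]
  smul_add a f g := by ext z; simp [smul_apply]
  add_smul a b f := by ext z; simp [smul_apply, add_smul]
  zero_smul f := by ext z; simp [smul_apply]

instance : IsScalarTower A Z (RegularDual k Z) where
  smul_assoc a z f := by
    ext y
    simp only [smul_apply, smul_eq_mul, smul_mul_assoc, mul_smul_comm]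

/-- The identity map from the `k`-dual of `Z` to its type synonym. -/
def ofDual : Module.Dual k Z ≃ₗ[k] RegularDual k Z where
  toFun f := f
  invFun f := f
  map_add' _ _ := rfl
  map_smul' c f := ext fun z ↦ ((smul_apply c _ z).trans (map_smul f c z)).symm

instance [FiniteDimensional k Z] : FiniteDimensional k (RegularDual k Z) :=
  Module.Finite.equiv ofDual

end Module

section HomEquiv

variable {Z : Type*} [CommRing Z] (k X : Type*) [Field k] [Algebra k Z] [AddCommGroup X]
  [Module Z X] [Module k X] [IsScalarTower k Z X]

variable (Z) in
/-- The coinduction adjunction `Hom_k(X, k) ≃ Hom_Z(X, Hom_k(Z, k))`, sending `f` to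
`x ↦ (z ↦ f (z • x))`; its inverse is composition with evaluation at `1`. -/
def homEquiv : (X →ₗ[k] k) ≃+ (X →ₗ[Z] RegularDual k Z) where
  toFun f :=
    { toFun := fun x ↦ ofDual (f ∘ₗ (LinearMap.toSpanSingleton Z X x).restrictScalars k)
      map_add' := fun x y ↦ ext fun z ↦ (congrArg f (smul_add z x y)).trans (map_add f _ _)
      map_smul' := fun a x ↦ ext fun z ↦ congrArg f <| by
        simp [smul_smul, mul_comm] }
  invFun g :=
    { toFun := fun x ↦ g x 1
      map_add' := fun x y ↦ by rw [map_add, add_apply]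
      map_smul' := fun c x ↦ by
        rw [← algebraMap_smul Z c x, map_smul, algebraMap_smul, smul_apply, map_smul,
          RingHom.id_apply] }
  left_inv f := LinearMap.ext fun x ↦ congrArg f (one_smul Z x)
  right_inv g := LinearMap.ext fun x ↦ ext fun z ↦ by
    change g (z • x) 1 = g x z
    rw [map_smul, smul_apply, smul_eq_mul, mul_one]
  map_add' _ _ := rfl

variable {k X}

theorem homEquiv_apply_apply (f : X →ₗ[k] k) (x : X) (z : Z) :
    homEquiv Z k X f x z = f (z • x) := rfl

theorem homEquiv_symm_apply (g : X →ₗ[Z] RegularDual k Z) (x : X) :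
    (homEquiv Z k X).symm g x = g x 1 := rfl

end HomEquiv

section Socle

variable {k Z : Type*} [Field k] [CommRing Z] [Algebra k Z]

-- A functional on `Hom_k(Z, k)` that vanishes on `Z ∙ w` but not at `v` is evaluation at some `z`,
-- and this `z` kills `w` but not `v`.
theorem mem_span_singleton_of_torsionOf_le [FiniteDimensional k Z] {v w : RegularDual k Z}
    (h : torsionOf Z _ w ≤ torsionOf Z _ v) : v ∈ Submodule.span Z {w} := by
  let orbit : Z →ₗ[k] Module.Dual k Z := (LinearMap.mul k Z).compr₂ (ofDual.symm w)
  suffices hv : ofDual.symm v ∈ LinearMap.range orbit by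
    obtain ⟨a, ha⟩ := hv
    exact Submodule.mem_span_singleton.2 ⟨a, ofDual.symm.injective ha⟩
  by_contra hv
  obtain ⟨F, hFv, hF⟩ := Submodule.exists_le_ker_of_notMem hv
  obtain ⟨z, rfl⟩ := (Module.evalEquiv k Z).surjective F
  have hzw : z • w = 0 := ext fun a ↦ by
    rw [smul_apply, smul_eq_mul, mul_comm]
    exact hF ⟨a, rfl⟩
  have hzv : z • v = 0 := h hzw
  apply hFv
  calc v z = (z • v) 1 := by rw [smul_apply, smul_eq_mul, mul_one]
    _ = 0 := by rw [hzv, zero_apply]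

variable (k) in
theorem exists_torsionOf_eq (m : Ideal Z) [hm : m.IsMaximal] :
    ∃ v : RegularDual k Z, torsionOf Z _ v = m := by
  have hone : (1 : Z) ∉ m.restrictScalars k := m.ne_top_iff_one.1 hm.ne_top
  obtain ⟨v, hv, hmv⟩ := Submodule.exists_le_ker_of_notMem hone
  refine ⟨ofDual v, (hm.eq_of_le ?_ fun z hz ↦ ?_).symm⟩
  · rw [Ne, torsionOf_eq_top_iff, map_eq_zero_iff _ ofDual.injective]
    rintro rfl
    exact hv rfl
  · ext y
    exact hmv (m.mul_mem_right y hz)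

end Socle

section Comparison

variable (k k' Z : Type*) [Field k] [Field k'] [CommRing Z] [Algebra k Z] [Algebra k' Z]
  [FiniteDimensional k Z]

theorem exists_dual_forall_isMaximal_torsionOf_exists_ne_zero :
    ∃ l : RegularDual k Z →ₗ[k'] k', ∀ w : RegularDual k Z, (torsionOf Z _ w).IsMaximal →
      ∃ v ∈ Submodule.span Z {w}, l v ≠ 0 := by
  choose v hv using fun m : MaximalSpectrum Z ↦ exists_torsionOf_eq k m.asIdeal
  have hindep : LinearIndependent k' v := by
    refine linearIndependent_of_isPrime_torsionOf (Z := Z) k'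
      (fun m ↦ hv m ▸ m.isMaximal.isPrime) fun m n hmn hle ↦ hmn ?_
    rw [hv, hv] at hle
    exact MaximalSpectrum.ext (m.isMaximal.eq_of_le n.isMaximal.ne_top hle)
  obtain ⟨l, hl⟩ := exists_linearMap_forall_apply_eq hindep fun _ ↦ (1 : k')
  refine ⟨l, fun w hw ↦ ⟨v ⟨_, hw⟩, mem_span_singleton_of_torsionOf_le (hv ⟨_, hw⟩).ge, ?_⟩⟩
  rw [hl]
  exact one_ne_zero

theorem exists_injective_linearMap :
    ∃ φ : RegularDual k Z →ₗ[Z] RegularDual k' Z, Function.Injective φ := by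
  have : IsArtinianRing Z := isArtinian_of_tower k inferInstance
  obtain ⟨l, hl⟩ := exists_dual_forall_isMaximal_torsionOf_exists_ne_zero k k' Z
  refine ⟨homEquiv Z k' _ l, LinearMap.ker_eq_bot.1 ?_⟩
  by_contra hker
  obtain ⟨w, hw, hmax⟩ := exists_mem_isMaximal_torsionOf_of_ne_bot hker
  obtain ⟨v, hvw, hlv⟩ := hl w hmax
  have hv : homEquiv Z k' _ l v = 0 := (Submodule.span_singleton_le_iff_mem _ _).2 hw hvw
  apply hlv
  rw [← (homEquiv Z k' _).symm_apply_apply l, homEquiv_symm_apply, hv, zero_apply]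

theorem nonempty_linearEquiv [FiniteDimensional k' Z] :
    Nonempty (RegularDual k Z ≃ₗ[Z] RegularDual k' Z) := by
  obtain ⟨φ, hφ⟩ := exists_injective_linearMap k k' Z
  obtain ⟨ψ, hψ⟩ := exists_injective_linearMap k' k Z
  have : IsArtinian Z (RegularDual k' Z) := isArtinian_of_tower k' inferInstance
  exact nonempty_linearEquiv_of_injective_of_injective hφ hψ

end Comparison

section DualEquiv

variable {k k' Z X Y : Type*} [Field k] [Field k'] [CommRing Z] [Algebra k Z] [Algebra k' Z]
  [AddCommGroup X] [Module Z X] [Module k X] [Module k' X]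
  [IsScalarTower k Z X] [IsScalarTower k' Z X]
  [AddCommGroup Y] [Module Z Y] [Module k Y] [Module k' Y]
  [IsScalarTower k Z Y] [IsScalarTower k' Z Y]

variable (X) in
/-- The bijection between the `k`-dual and the `k'`-dual of a `Z`-module `X` induced by an
isomorphism between those of `Z`. -/
def dualEquiv (φ : RegularDual k Z ≃ₗ[Z] RegularDual k' Z) : (X →ₗ[k] k) ≃+ (X →ₗ[k'] k') :=
  (homEquiv Z k X).trans <| φ.congrRight.toAddEquiv.trans (homEquiv Z k' X).symm

theorem dualEquiv_apply (φ : RegularDual k Z ≃ₗ[Z] RegularDual k' Z) (f : X →ₗ[k] k) (x : X) :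
    dualEquiv X φ f x = φ (homEquiv Z k X f x) 1 := rfl

theorem dualEquiv_comp (φ : RegularDual k Z ≃ₗ[Z] RegularDual k' Z) (f : Y →ₗ[k] k)
    (h : X →ₗ[Z] Y) :
    dualEquiv X φ (f ∘ₗ h.restrictScalars k) = dualEquiv Y φ f ∘ₗ h.restrictScalars k' := by
  ext x
  have hcomp : homEquiv Z k X (f ∘ₗ h.restrictScalars k) x = homEquiv Z k Y f (h x) := by
    ext z
    simp [homEquiv_apply_apply]
  simp [dualEquiv_apply, hcomp]

end DualEquiv

end RegularDual

section Center

/-- The center of `R` as a `k`-algebra. The type `Subalgebra.center k R` depends on `k`, whereas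
both fields have to act on one ring. -/
local instance centerAlgebra (k R : Type*) [Field k] [Ring R] [Algebra k R] :
    Algebra k (Subring.center R) :=
  inferInstanceAs (Algebra k (Subalgebra.center k R))

local instance finiteDimensional_center (k R : Type*) [Field k] [Ring R] [Algebra k R]
    [FiniteDimensional k (Subalgebra.center k R)] : FiniteDimensional k (Subring.center R) :=
  inferInstanceAs (FiniteDimensional k (Subalgebra.center k R))

local instance isScalarTower_center (k R X : Type*) [Field k] [Ring R] [Algebra k R]
    [AddCommGroup X] [Module R X] [Module k X] [IsScalarTower k R X] :
    IsScalarTower k (Subring.center R) X :=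
  inferInstanceAs (IsScalarTower k (Subalgebra.center k R) X)

local instance smulCommClass_center (R X : Type*) [Ring R] [AddCommGroup X] [Module R X] :
    SMulCommClass R (Subring.center R) X where
  smul_comm r z x := by
    simp only [Subring.smul_def, smul_smul, Subring.mem_center_iff.1 z.2 r]

theorem k_dual_independent_of_field_general {k₁ k₂ R : Type*} [Field k₁] [Field k₂] [Ring R]
    [Algebra k₁ R] [Algebra k₂ R] [FiniteDimensional k₁ (Subalgebra.center k₁ R)]
    [FiniteDimensional k₂ (Subalgebra.center k₂ R)] (X : Type*) [AddCommGroup X] [Module R X]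
    [Module k₁ X] [Module k₂ X] [IsScalarTower k₁ R X] [IsScalarTower k₂ R X] :
    ∃ e : (X →ₗ[k₁] k₁) ≃+ (X →ₗ[k₂] k₂),
      ∀ (f : X →ₗ[k₁] k₁) (r : R) (x : X),
        e (dualSMul k₁ R X r f) x = e f (r • x) := by
  obtain ⟨φ⟩ := RegularDual.nonempty_linearEquiv k₁ k₂ (Subring.center R)
  refine ⟨RegularDual.dualEquiv X φ, fun f r x ↦ ?_⟩
  let rMul : X →ₗ[Subring.center R] X := DistribSMul.toLinearMap (Subring.center R) X r
  exact LinearMap.congr_fun (RegularDual.dualEquiv_comp φ f rMul) x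

end Center

/-- **Corollary: the dual functor is independent of the field.**
Let `R` be a ring that is a finite-dimensional algebra over infinite fields `k₁` and `k₂`,
and suppose `R` is a Frobenius `k₁`-algebra.  Then for every left `R`-module `X` there is
an additive bijection `e : Hom_{k₁}(X,k₁) ≃+ Hom_{k₂}(X,k₂)` that is right `R`-equivariant:
`e (f · r) x = (e f) (r • x)`, where `(f · r) x = f (r • x)`; i.e. the `k₁`-dual and the
`k₂`-dual of `X` are isomorphic as right `R`-modules. -/
theorem k_dual_independent_of_field
    {k₁ k₂ R : Type u} [Field k₁] [Field k₂] [Infinite k₁] [Infinite k₂] [Ring R]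
    [Algebra k₁ R] [Algebra k₂ R]
    [FiniteDimensional k₁ R] [FiniteDimensional k₂ R]
    (hFrob : ∃ lam₁ : R →ₗ[k₁] k₁,
      ∀ I : Ideal R, (I : Set R) ⊆ {x | lam₁ x = 0} → I = ⊥)
    (X : Type v) [AddCommGroup X] [Module R X] [Module k₁ X] [Module k₂ X]
    [IsScalarTower k₁ R X] [IsScalarTower k₂ R X] :
    ∃ e : (X →ₗ[k₁] k₁) ≃+ (X →ₗ[k₂] k₂),
      ∀ (f : X →ₗ[k₁] k₁) (r : R) (x : X),
        e (dualSMul k₁ R X r f) x = e f (r • x) :=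
  k_dual_independent_of_field_general X
end

section
/- Let R be a ring that is a finite-dimensional algebra over infinite fields k₁ and k₂, and suppose R is a Frobenius k₁-algebra, i.e., there exists a k₁-linear functional λ₁ : R → k₁ whose kernel contains no nonzero left ideals of R. Then there exists an additive bijection e : Hom_{k₁}(R, k₁) → Hom_{k₂}(R, k₂) that is an (R,R)-bimodule isomorphism: for all f ∈ Hom_{k₁}(R, k₁), r, s ∈ R, e(r·f)(s) = (r·(e f))(s) and e(f·r)(s) = ((e f)·r)(s), where (r·f)(s) = f(s*r) and (f·r)(s) = f(r*s). -/
/-!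
Let `C` be the center of `R`. The `C`-module `D₁ = Hom_{k₁}(C, k₁)` has the property that two
elements with the same annihilator generate the same submodule; since `C` is artinian, vectors
chosen one for each associated prime of `D₁` therefore meet every nonzero submodule of `D₁`. Their
annihilators are pairwise comaximal, so they are linearly independent over `k₂`, and some
`k₂`-linear `μ : D₁ → k₂` is nonzero at each of them. Composing the adjunction isomorphism
`Hom_{k₁}(R, k₁) ≃ Hom_C(R, D₁)` with `μ` gives an injection of bimodules
`Hom_{k₁}(R, k₁) → Hom_{k₂}(R, k₂)`. By symmetry there is one in the other direction, and counting
dimensions shows that both are bijective.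
-/

open Function Ideal Module Submodule

theorem exists_dual_forall_apply_eq_one {k V ι : Type*} [Field k] [AddCommGroup V] [Module k V]
    {v : ι → V} (hv : LinearIndependent k v) : ∃ μ : Dual k V, ∀ i, μ (v i) = 1 := by
  obtain ⟨g, hg⟩ := LinearMap.exists_leftInverse_of_injective (Finsupp.linearCombination k v)
    (LinearMap.ker_eq_bot.2 hv)
  have g_v (i : ι) : g (v i) = Finsupp.single i 1 := by
    simpa using LinearMap.congr_fun hg (Finsupp.single i 1)
  exact ⟨Finsupp.linearCombination k (fun _ ↦ 1) ∘ₗ g, fun i ↦ by simp [g_v]⟩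

section Annihilators

variable {k C D : Type*} [CommRing C] [AddCommGroup D] [Module C D]

theorem exists_mem_isMaximal_torsionOf [IsArtinianRing C] {N : Submodule C D} (hN : N ≠ ⊥) :
    ∃ x ∈ N, (torsionOf C D x).IsMaximal := by
  have := Submodule.nontrivial_iff_ne_bot.2 hN
  obtain ⟨P, hP⟩ := associatedPrimes.nonempty C N
  obtain ⟨P_prime, x, hPx⟩ := isAssociatedPrime_iff.1 hP
  have torsionOf_eq : torsionOf C D x = P := by
    ext c
    simp [hPx, mem_colon_singleton, ← Subtype.val_inj]
  exact ⟨x, x.2, torsionOf_eq ▸ inferInstance⟩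

theorem linearIndependent_of_pairwise_isCoprime_torsionOf [Field k] [Module k D]
    [SMulCommClass C k D] {ι : Type*} {v : ι → D} (hv : ∀ i, v i ≠ 0)
    (hcop : Pairwise (IsCoprime on fun i ↦ torsionOf C D (v i))) : LinearIndependent k v := by
  classical
  rw [linearIndependent_iff']
  intro s a ha i hi
  obtain ⟨c, hc⟩ := exists_forall_sub_mem_ideal
    (hcop.comp_of_injective (Subtype.val_injective (p := (· ∈ s))))
    fun j ↦ (Pi.single i 1 : ι → C) j
  have smul_v : ∀ j ∈ s, c • v j = (Pi.single i 1 : ι → C) j • v j := fun j hj ↦ by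
    rw [← sub_eq_zero, ← sub_smul]
    exact hc ⟨j, hj⟩
  have smul_v_eq_zero : a i • v i = 0 :=
    calc a i • v i = ∑ j ∈ s, a j • (Pi.single i 1 : ι → C) j • v j := by
          rw [Finset.sum_eq_single_of_mem i hi fun j _ hji ↦ by simp [hji]]
          simp
      _ = ∑ j ∈ s, a j • c • v j := Finset.sum_congr rfl fun j hj ↦ by rw [smul_v j hj]
      _ = c • ∑ j ∈ s, a j • v j := by simp_rw [Finset.smul_sum, smul_comm c]
      _ = 0 := by rw [ha, smul_zero]
  exact (smul_eq_zero.1 smul_v_eq_zero).resolve_right (hv i)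

variable (k) in
theorem exists_dual_eq_bot_of_le_ker [IsArtinianRing C] [Field k] [Module k D]
    [SMulCommClass C k D]
    (hD : ∀ x y : D, torsionOf C D x = torsionOf C D y → y ∈ C ∙ x) :
    ∃ μ : Dual k D, ∀ N : Submodule C D, (∀ x ∈ N, μ x = 0) → N = ⊥ := by
  let S := {m : Ideal C // m.IsMaximal ∧ ∃ x : D, torsionOf C D x = m}
  choose v torsionOf_v using fun m : S ↦ m.2.2
  have v_ne_zero (m : S) : v m ≠ 0 := fun hvm ↦ m.2.1.ne_top <| by
    rw [← torsionOf_v m, hvm, torsionOf_zero]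
  have coprime : Pairwise (IsCoprime on fun m ↦ torsionOf C D (v m)) := fun m n hmn ↦ by
    have := m.2.1
    have := n.2.1
    simpa only [onFun, torsionOf_v] using isCoprime_of_isMaximal (Subtype.coe_ne_coe.2 hmn)
  have v_linearIndependent : LinearIndependent k v :=
    linearIndependent_of_pairwise_isCoprime_torsionOf v_ne_zero coprime
  obtain ⟨μ, hμ⟩ := exists_dual_forall_apply_eq_one v_linearIndependent
  refine ⟨μ, fun N hN ↦ ?_⟩
  by_contra N_ne_bot
  obtain ⟨x, hxN, hx⟩ := exists_mem_isMaximal_torsionOf N_ne_bot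
  let m : S := ⟨torsionOf C D x, hx, x, rfl⟩
  have v_mem : v m ∈ N := (span_singleton_le_iff_mem x N).2 hxN (hD x (v m) (torsionOf_v m).symm)
  exact one_ne_zero ((hμ m).symm.trans (hN _ v_mem))

end Annihilators

section Dual

variable {k C M : Type*} [CommRing C]

/-- The action of a commutative `k`-algebra `C` on its `k`-dual, `(c • f) d = f (c * d)`. It is only a
local instance: for `C = k` it agrees with the pointwise action, but not definitionally. -/
abbrev dualModule [CommRing k] [Algebra k C] : Module C (Dual k C) where
  smul c f := f ∘ₗ LinearMap.mulLeft k c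
  one_smul f := by ext d; exact congrArg f (one_mul d)
  mul_smul a b f := by ext d; exact congrArg f (by rw [mul_comm a b]; exact mul_assoc b a d)
  smul_zero _ := rfl
  smul_add _ _ _ := rfl
  add_smul a b f := by ext d; exact (congrArg f (add_mul a b d)).trans (map_add f _ _)
  zero_smul f := by ext d; exact (congrArg f (zero_mul d)).trans (map_zero f)

attribute [local instance] dualModule

theorem dualModule_smul_apply [CommRing k] [Algebra k C] (c d : C) (f : Dual k C) :
    (c • f) d = f (c * d) := rfl

theorem dual_mem_span_singleton_of_torsionOf_le [Field k] [Algebra k C] [FiniteDimensional k C]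
    {f g : Dual k C} (hfg : torsionOf C (Dual k C) f ≤ torsionOf C (Dual k C) g) :
    g ∈ C ∙ f := by
  have : IsScalarTower k C (Dual k C) := ⟨fun a c h ↦ by
    ext d
    simp [dualModule_smul_apply]⟩
  let W : Submodule k (Dual k C) := (C ∙ f).restrictScalars k
  suffices g ∈ W.dualCoannihilator.dualAnnihilator by
    rwa [Subspace.dualCoannihilator_dualAnnihilator_eq] at this
  rw [mem_dualAnnihilator]
  intro x hx
  have x_smul_f : x • f = 0 := by
    ext c
    rw [dualModule_smul_apply, mul_comm]
    exact (mem_dualCoannihilator x).1 hx (c • f) (mem_span_singleton.2 ⟨c, rfl⟩)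
  have x_smul_g : x • g = 0 := hfg x_smul_f
  rw [← mul_one x, ← dualModule_smul_apply, x_smul_g, LinearMap.zero_apply]

/-- The `C`-linear map `M → Hom_k(C, k)` that corresponds to a `k`-linear functional on the
`C`-module `M` under the adjunction between restriction and coextension of scalars. -/
def coextendDual (C : Type*) [CommRing C] [CommRing k] [Algebra k C] [AddCommGroup M] [Module C M]
    [Module k M] [IsScalarTower k C M] (f : Dual k M) : M →ₗ[C] Dual k C where
  toFun m := f ∘ₗ (LinearMap.toSpanSingleton C M m).restrictScalars k
  map_add' m n := by ext c; simp
  map_smul' a m := by ext c; simp [dualModule_smul_apply, smul_smul, mul_comm]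

theorem coextendDual_apply [CommRing k] [Algebra k C] [AddCommGroup M] [Module C M]
    [Module k M] [IsScalarTower k C M] (f : Dual k M) (m : M) (c : C) :
    coextendDual C f m c = f (c • m) := rfl

section Transfer

variable (k₁ k₂ C M : Type*) [Field k₁] [Field k₂] [CommRing C] [Algebra k₁ C] [Algebra k₂ C]
  [FiniteDimensional k₁ C] [AddCommGroup M] [Module C M] [Module k₁ M] [Module k₂ M]
  [IsScalarTower k₁ C M] [IsScalarTower k₂ C M]

theorem exists_injective_dual_addMonoidHom_dual :
    ∃ Φ : Dual k₁ M →+ Dual k₂ M, Injective Φ ∧ ∀ (f : Dual k₁ M) (φ : M →ₗ[C] M),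
      Φ (f ∘ₗ φ.restrictScalars k₁) = Φ f ∘ₗ φ.restrictScalars k₂ := by
  have : IsArtinianRing C := .of_finite k₁ C
  let : Module k₂ (Dual k₁ C) := .compHom _ (algebraMap k₂ C)
  have : IsScalarTower k₂ C (Dual k₁ C) := .of_algebraMap_smul fun _ _ ↦ rfl
  obtain ⟨μ, hμ⟩ := exists_dual_eq_bot_of_le_ker k₂ (C := C) (D := Dual k₁ C)
    fun f g hfg ↦ dual_mem_span_singleton_of_torsionOf_le hfg.le
  let Φ : Dual k₁ M →+ Dual k₂ M :=
    { toFun f := μ ∘ₗ (coextendDual C f).restrictScalars k₂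
      map_zero' := LinearMap.ext fun _ ↦ map_zero μ
      map_add' f g := LinearMap.ext fun m ↦ map_add μ (coextendDual C f m) (coextendDual C g m) }
  refine ⟨Φ, (injective_iff_map_eq_zero Φ).2 fun f hf ↦ ?_, fun f φ ↦ ?_⟩
  · have range_eq_bot : LinearMap.range (coextendDual C f) = ⊥ := hμ _ <| by
      rintro _ ⟨m, rfl⟩
      exact LinearMap.congr_fun hf m
    ext m
    rw [← one_smul C m, ← coextendDual_apply, LinearMap.range_eq_bot.1 range_eq_bot]
    rfl
  · ext m
    refine congrArg μ (LinearMap.ext fun c ↦ ?_)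
    simp [coextendDual_apply]

theorem exists_dual_addEquiv_dual [FiniteDimensional k₂ C] [FiniteDimensional k₂ M] :
    ∃ e : Dual k₁ M ≃+ Dual k₂ M, ∀ (f : Dual k₁ M) (φ : M →ₗ[C] M),
      e (f ∘ₗ φ.restrictScalars k₁) = e f ∘ₗ φ.restrictScalars k₂ := by
  obtain ⟨Φ, Φ_inj, Φ_comp⟩ := exists_injective_dual_addMonoidHom_dual k₁ k₂ C M
  obtain ⟨Ψ, Ψ_inj, Ψ_comp⟩ := exists_injective_dual_addMonoidHom_dual k₂ k₁ C M
  let ΦΨ : Dual k₂ M →ₗ[k₂] Dual k₂ M :=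
    { __ := Φ.comp Ψ
      map_smul' a g := by
        have smul_eq_comp (h : Dual k₂ M) :
            a • h = h ∘ₗ (LinearMap.lsmul C M (algebraMap k₂ C a)).restrictScalars k₂ := by
          ext m
          simp
        simp [smul_eq_comp, Φ_comp, Ψ_comp] }
  have ΦΨ_surj : Surjective ΦΨ := LinearMap.surjective_of_injective (Φ_inj.comp Ψ_inj)
  exact ⟨.ofBijective Φ ⟨Φ_inj, .of_comp ΦΨ_surj⟩, Φ_comp⟩

end Transfer

end Dual

section Center

variable {k R : Type*} [Ring R]

/-- The structure map `k → R` of a `k`-algebra takes values in the center of `R`; this makes the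
center of the ring `R`, which does not depend on `k`, a `k`-algebra. -/
abbrev centerAlgebra_s13 [CommRing k] [Algebra k R] : Algebra k (Subring.center R) :=
  ((algebraMap k R).codRestrict (Subring.center R) fun a ↦
    Subring.mem_center_iff.2 fun r ↦ (Algebra.commutes a r).symm).toAlgebra

attribute [local instance] centerAlgebra_s13

theorem isScalarTower_center_s13 [CommRing k] [Algebra k R] :
    IsScalarTower k (Subring.center R) R :=
  .of_algebraMap_eq fun _ ↦ rfl

theorem finiteDimensional_center_s13 [Field k] [Algebra k R] [FiniteDimensional k R] :
    FiniteDimensional k (Subring.center R) :=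
  have := isScalarTower_center_s13 (k := k) (R := R)
  .of_injective (IsScalarTower.toAlgHom k (Subring.center R) R).toLinearMap Subtype.val_injective

attribute [local instance] isScalarTower_center_s13 finiteDimensional_center_s13

theorem bimodule_dual_independent_of_field_general
    {k₁ k₂ R : Type*} [Field k₁] [Field k₂] [Ring R] [Algebra k₁ R] [Algebra k₂ R]
    [FiniteDimensional k₁ R] [FiniteDimensional k₂ R] :
    ∃ e : (R →ₗ[k₁] k₁) ≃+ (R →ₗ[k₂] k₂),
      (∀ (f : R →ₗ[k₁] k₁) (r s : R),
        e (f.comp (LinearMap.mulRight k₁ r)) s = e f (s * r)) ∧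
      (∀ (f : R →ₗ[k₁] k₁) (r s : R),
        e (f.comp (LinearMap.mulLeft k₁ r)) s = e f (r * s)) := by
  obtain ⟨e, he⟩ := exists_dual_addEquiv_dual k₁ k₂ (Subring.center R) R
  exact ⟨e, fun f r ↦ LinearMap.congr_fun (he f (LinearMap.mulRight _ r)),
    fun f r ↦ LinearMap.congr_fun (he f (LinearMap.mulLeft _ r))⟩

end Center

/-- **Corollary: the bimodule type of the dual of `R` is independent of the
field.**  Let `R` be a ring that is a finite-dimensional algebra over infinite fields `k₁`
and `k₂`, and suppose `R` is a Frobenius `k₁`-algebra.  Then there is an additive bijection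
`e : Hom_{k₁}(R,k₁) ≃+ Hom_{k₂}(R,k₂)` that is an `(R,R)`-bimodule isomorphism:
`e (r·f) = r·(e f)` and `e (f·r) = (e f)·r`, where `(r·f) s = f (s*r)` and
`(f·r) s = f (r*s)`. -/
theorem bimodule_dual_independent_of_field
    {k₁ k₂ R : Type*} [Field k₁] [Field k₂] [Infinite k₁] [Infinite k₂] [Ring R]
    [Algebra k₁ R] [Algebra k₂ R]
    [FiniteDimensional k₁ R] [FiniteDimensional k₂ R]
    (hFrob : ∃ lam₁ : R →ₗ[k₁] k₁,
      ∀ I : Ideal R, (I : Set R) ⊆ {x | lam₁ x = 0} → I = ⊥) :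
    ∃ e : (R →ₗ[k₁] k₁) ≃+ (R →ₗ[k₂] k₂),
      (∀ (f : R →ₗ[k₁] k₁) (r s : R),
        e (f.comp (LinearMap.mulRight k₁ r)) s = e f (s * r)) ∧
      (∀ (f : R →ₗ[k₁] k₁) (r s : R),
        e (f.comp (LinearMap.mulLeft k₁ r)) s = e f (r * s)) := by
  exact bimodule_dual_independent_of_field_general
end

section
/- Let R be a finite-dimensional algebra over a field k that is a symmetric k-algebra, i.e., there exists a k-linear functional λ : R → k with λ(r*s) = λ(s*r) for all r, s ∈ R and whose kernel contains no nonzero left ideals of R. Let J be the Jacobson radical of R, R̄ = R/J, and S = soc(_R R) the left socle of R. Then: (a) the commutator subgroup [R,R] contains no nonzero left ideals of R; and (b) S is a two-sided ideal of R and there is an additive bijection e : S → R̄ satisfying e(r * x) = r · e(x) and e(x * r) = e(x) · r for all r ∈ R, x ∈ S, i.e., S ≅ R̄ as (R,R)-bimodules. -/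
/-- The left socle of a ring `R`: the sum of all simple left ideals of `R`. -/
def leftSocle (R : Type*) [Ring R] : Ideal R :=
  sSup {I : Ideal R | IsSimpleModule R I}

/-- The additive subgroup `[R,R]` of `R` generated by all commutators `r*s - s*r`. -/
def commutatorSubgroup (R : Type*) [Ring R] : AddSubgroup R :=
  AddSubgroup.closure {x : R | ∃ r s : R, x = r * s - s * r}

/-!
The quotient `R̄ = R/J` is semisimple, so it carries a symmetrizing form `t` of its own: nonzero
traces on the simple factors, obtained from matrix traces over the algebraic closure of `k`, are
nondegenerate by simplicity. Pulling `t` back to `R` and representing it as `t (π r) = λ (z * r)`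
gives a central element `z`, since both forms are traces. Nondegeneracy of `t` shows that the
annihilator of `z` is `J`, and duality on `R̄` shows that `R z` is the annihilator of `J`, which
is the socle because `R̄` is semisimple. Hence `r ↦ r * z` induces the isomorphism `R̄ ≅ S`.
-/

section Ring

variable {R : Type*} [Ring R]

theorem commutatorSubgroup_le_ker {M : Type*} [AddGroup M] (f : R →+ M)
    (hf : ∀ r s, f (r * s) = f (s * r)) : commutatorSubgroup R ≤ f.ker := by
  rw [commutatorSubgroup, AddSubgroup.closure_le]
  rintro _ ⟨r, s, rfl⟩
  simp [AddMonoidHom.mem_ker, hf r s]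

theorem le_leftSocle (I : Ideal R) [IsSemisimpleModule R I] : I ≤ leftSocle R := by
  have simples_le_socle (N : Submodule R I) (hN : IsSimpleModule R N) :
      N.map I.subtype ≤ leftSocle R :=
    le_sSup (IsSimpleModule.congr
      (Submodule.equivMapOfInjective I.subtype I.injective_subtype N).symm)
  calc
    I = (sSup {N : Submodule R I | IsSimpleModule R N}).map I.subtype := by
      rw [IsSemisimpleModule.sSup_simples_eq_top, Submodule.map_subtype_top]
    _ ≤ leftSocle R :=
      Submodule.map_le_iff_le_comap.2
        (sSup_le fun N hN => Submodule.map_le_iff_le_comap.1 (simples_le_socle N hN))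

theorem isSemisimpleModule_leftSocle : IsSemisimpleModule R (leftSocle R) := by
  rw [leftSocle, sSup_eq_iSup]
  exact isSemisimpleModule_biSup_of_isSemisimpleModule_submodule fun I hI =>
    have : IsSimpleModule R I := hI
    inferInstance

theorem mul_eq_zero_of_mem_jacobson_of_mem_leftSocle {j x : R} (hj : j ∈ Ring.jacobson R)
    (hx : x ∈ leftSocle R) : j * x = 0 := by
  have := isSemisimpleModule_leftSocle (R := R)
  have j_mem := IsSemisimpleModule.jacobson_le_annihilator R (leftSocle R) hj
  exact congrArg Subtype.val (Module.mem_annihilator.1 j_mem ⟨x, hx⟩)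

theorem mem_leftSocle_iff [IsSemisimpleRing (R ⧸ Ring.jacobson R)] {x : R} :
    x ∈ leftSocle R ↔ ∀ j ∈ Ring.jacobson R, j * x = 0 := by
  refine ⟨fun hx j hj => mul_eq_zero_of_mem_jacobson_of_mem_leftSocle hj hx, fun hx => ?_⟩
  have torsion : Module.IsTorsionBySet R (Ideal.span {x}) (Ring.jacobson R : Set R) := by
    rintro ⟨y, hy⟩ ⟨j, hj⟩
    obtain ⟨r, rfl⟩ := Ideal.mem_span_singleton'.1 hy
    ext
    change j * (r * x) = 0
    rw [← mul_assoc]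
    exact hx _ (Ideal.mul_mem_right r _ hj)
  let _ := torsion.module
  have : IsSemisimpleModule R (Ideal.span {x}) := torsion.isSemisimpleModule_iff.1 inferInstance
  exact le_leftSocle _ (Ideal.mem_span_singleton_self x)

theorem mul_mem_leftSocle_right [IsSemisimpleRing (R ⧸ Ring.jacobson R)] {x : R}
    (hx : x ∈ leftSocle R) (r : R) : x * r ∈ leftSocle R := by
  rw [mem_leftSocle_iff] at hx ⊢
  intro j hj
  rw [← mul_assoc, hx j hj, zero_mul]

theorem exists_linearEquiv_quotient_of_eq_mul {I L : Ideal R} {z : R}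
    (hI : ∀ r, r * z = 0 ↔ r ∈ I) (hL : ∀ x, x ∈ L ↔ ∃ r, r * z = x) :
    ∃ e : L ≃ₗ[R] R ⧸ I, ∀ (x : L) (y : R), e x = Submodule.Quotient.mk y ↔ (x : R) = y * z := by
  have ker_eq : LinearMap.ker (LinearMap.toSpanSingleton R R z) = I := Submodule.ext hI
  have range_eq : LinearMap.range (LinearMap.toSpanSingleton R R z) = L :=
    Submodule.ext fun x => (hL x).symm
  subst ker_eq range_eq
  refine ⟨(LinearMap.toSpanSingleton R R z).quotKerEquivRange.symm, fun x y => ?_⟩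
  rw [LinearEquiv.symm_apply_eq, Subtype.ext_iff]
  rfl

end Ring

section TraceForm

open scoped TensorProduct

theorem exists_surjective_algHom_matrix (K A : Type*) [Field K] [IsAlgClosed K] [Ring A]
    [Algebra K A] [FiniteDimensional K A] [Nontrivial A] :
    ∃ (n : ℕ) (_ : NeZero n) (φ : A →ₐ[K] Matrix (Fin n) (Fin n) K), Function.Surjective φ := by
  have : IsArtinianRing A := .of_finite K A
  have : Nontrivial (A ⧸ Ring.jacobson A) :=
    Ideal.Quotient.nontrivial_iff.2 (Ring.jacobson_lt_top A).ne
  obtain ⟨n, d, hd, ⟨e⟩⟩ :=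
    IsSemisimpleRing.exists_algEquiv_pi_matrix_of_isAlgClosed K (A ⧸ Ring.jacobson A)
  obtain ⟨i⟩ : Nonempty (Fin n) := by
    by_contra! h
    exact not_subsingleton _ e.injective.subsingleton
  refine ⟨d i, hd i, (Pi.evalAlgHom K _ i).comp (e.toAlgHom.comp (Ideal.Quotient.mkₐ K _)), ?_⟩
  exact (Function.surjective_eval i).comp (e.surjective.comp Ideal.Quotient.mk_surjective)

theorem exists_trace_ne_zero_of_isAlgClosed (K A : Type*) [Field K] [IsAlgClosed K] [Ring A]
    [Algebra K A] [FiniteDimensional K A] [Nontrivial A] :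
    ∃ t : A →ₗ[K] K, (∀ a b, t (a * b) = t (b * a)) ∧ t ≠ 0 := by
  obtain ⟨n, _, φ, hφ⟩ := exists_surjective_algHom_matrix K A
  refine ⟨Matrix.traceLinearMap (Fin n) K K ∘ₗ φ.toLinearMap, fun a b => ?_, fun h => ?_⟩
  · simp [Matrix.trace_mul_comm (φ a)]
  · obtain ⟨a, ha⟩ := hφ (Matrix.single 0 0 1)
    simpa [ha] using LinearMap.congr_fun h a

theorem exists_trace_ne_zero_of_baseChange {k K A : Type*} [CommRing k] [CommRing K] [Algebra k K]
    [Module.Projective k K] [Ring A] [Algebra k A] (T : K ⊗[k] A →ₗ[K] K)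
    (hT : ∀ x y, T (x * y) = T (y * x)) (hT0 : T ≠ 0) :
    ∃ t : A →ₗ[k] k, (∀ a b, t (a * b) = t (b * a)) ∧ t ≠ 0 := by
  obtain ⟨a, ha⟩ : ∃ a : A, T (1 ⊗ₜ a) ≠ 0 := by
    by_contra! h
    exact hT0 (by ext a; simpa using h a)
  obtain ⟨l, hl⟩ := Module.Projective.exists_dual_ne_zero k ha
  refine ⟨l ∘ₗ T.restrictScalars k ∘ₗ Algebra.TensorProduct.includeRight.toLinearMap,
    fun x y => ?_, fun h => hl (LinearMap.congr_fun h a)⟩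
  simp only [LinearMap.comp_apply, AlgHom.toLinearMap_apply, map_mul,
    LinearMap.restrictScalars_apply, hT]

theorem exists_trace_ne_zero (k A : Type*) [Field k] [Ring A] [Algebra k A]
    [FiniteDimensional k A] [Nontrivial A] :
    ∃ t : A →ₗ[k] k, (∀ a b, t (a * b) = t (b * a)) ∧ t ≠ 0 := by
  obtain ⟨T, hT, hT0⟩ :=
    exists_trace_ne_zero_of_isAlgClosed (AlgebraicClosure k) (AlgebraicClosure k ⊗[k] A)
  exact exists_trace_ne_zero_of_baseChange T hT hT0

end TraceForm

/-- A symmetrizing form on a `k`-algebra `A`: a trace functional `f` whose associated bilinear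
form `(a, b) ↦ f (a * b)` is nondegenerate. An algebra is symmetric when it has such a form.
Nondegeneracy is stated in the first variable only, the form being symmetric. -/
structure IsSymmetrizing {k A : Type*} [CommRing k] [Ring A] [Algebra k A] (f : A →ₗ[k] k) :
    Prop where
  map_mul_comm : ∀ a b, f (a * b) = f (b * a)
  eq_zero_of_forall_map_mul : ∀ a, (∀ b, f (a * b) = 0) → a = 0

namespace IsSymmetrizing

section CommRing

variable {k A B : Type*} [CommRing k] [Ring A] [Algebra k A] [Ring B] [Algebra k B]

theorem of_forall_ideal_eq_bot {f : A →ₗ[k] k} (hf : ∀ a b, f (a * b) = f (b * a))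
    (hker : ∀ I : Ideal A, (I : Set A) ⊆ {x | f x = 0} → I = ⊥) : IsSymmetrizing f := by
  refine ⟨hf, fun a ha => Ideal.span_singleton_eq_bot.1 (hker _ fun x hx => ?_)⟩
  obtain ⟨c, rfl⟩ := Ideal.mem_span_singleton'.1 hx
  exact (hf c a).trans (ha c)

theorem of_isSimpleRing [IsSimpleRing A] {f : A →ₗ[k] k} (hf : ∀ a b, f (a * b) = f (b * a))
    (hf0 : f ≠ 0) : IsSymmetrizing f := by
  let radical : TwoSidedIdeal A := .mk' {a | ∀ b, f (a * b) = 0}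
    (fun b => by simp)
    (fun ha hb c => by rw [add_mul, map_add, ha c, hb c, add_zero])
    (fun ha b => by rw [neg_mul, map_neg, ha b, neg_zero])
    (fun {c a} ha b => by rw [mul_assoc, hf, mul_assoc, ha])
    (fun {a c} ha b => by rw [mul_assoc, ha])
  have mem_radical (a : A) : a ∈ radical ↔ ∀ b, f (a * b) = 0 := TwoSidedIdeal.mem_mk' ..
  refine ⟨hf, fun a ha => by_contra fun ha0 => hf0 (LinearMap.ext fun b => ?_)⟩
  have one_mem : 1 ∈ radical := IsSimpleRing.one_mem_of_ne_zero_mem _ ha0 ((mem_radical a).2 ha)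
  simpa using (mem_radical 1).1 one_mem b

theorem comp_algEquiv {g : B →ₗ[k] k} (hg : IsSymmetrizing g) (e : A ≃ₐ[k] B) :
    IsSymmetrizing (g ∘ₗ e.toLinearMap) where
  map_mul_comm a b := by simp [hg.map_mul_comm (e a)]
  eq_zero_of_forall_map_mul a ha := by
    refine e.map_eq_zero_iff.1 (hg.eq_zero_of_forall_map_mul _ fun b => ?_)
    simpa using ha (e.symm b)

theorem sum_comp_proj {ι : Type*} [Fintype ι] {A : ι → Type*} [∀ i, Ring (A i)]
    [∀ i, Algebra k (A i)] {f : ∀ i, A i →ₗ[k] k} (hf : ∀ i, IsSymmetrizing (f i)) :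
    IsSymmetrizing (∑ i, f i ∘ₗ LinearMap.proj i) where
  map_mul_comm a b := by simp [(hf _).map_mul_comm (a _)]
  eq_zero_of_forall_map_mul a ha := by
    classical
    refine funext fun i => (hf i).eq_zero_of_forall_map_mul _ fun b => ?_
    have sum_eq : ∑ j, f j (a j * Pi.single i b j) = f i (a i * b) := by
      rw [Fintype.sum_eq_single i fun j hj => by simp [hj], Pi.single_eq_same]
    simpa [sum_eq] using ha (Pi.single i b)

theorem eq_of_forall_map_mul_eq {f : A →ₗ[k] k} (hf : IsSymmetrizing f) {a b : A}
    (h : ∀ c, f (a * c) = f (b * c)) : a = b :=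
  sub_eq_zero.1 <| hf.eq_zero_of_forall_map_mul _ fun c => by rw [sub_mul, map_sub, h, sub_self]

theorem commute_of_forall_eq_map_mul {f h : A →ₗ[k] k} (hf : IsSymmetrizing f)
    (hh : ∀ a b, h (a * b) = h (b * a)) {z : A} (hz : ∀ a, h a = f (z * a)) (a : A) :
    Commute z a := by
  refine hf.eq_of_forall_map_mul_eq fun b => ?_
  calc
    f (z * a * b) = h (a * b) := by rw [mul_assoc, hz]
    _ = h (b * a) := hh a b
    _ = f (z * b * a) := by rw [mul_assoc, hz]
    _ = f (a * z * b) := by rw [hf.map_mul_comm, mul_assoc]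

theorem mul_eq_zero_iff_map_eq_zero {f : A →ₗ[k] k} {g : B →ₗ[k] k} (hf : IsSymmetrizing f)
    (hg : IsSymmetrizing g) {φ : A →ₐ[k] B} (hφ : Function.Surjective φ) {z : A}
    (hz : ∀ a, g (φ a) = f (z * a)) (a : A) : z * a = 0 ↔ φ a = 0 := by
  constructor <;> intro ha
  · refine hg.eq_zero_of_forall_map_mul _ (hφ.forall.2 fun b => ?_)
    rw [← map_mul, hz, ← mul_assoc, ha, zero_mul, map_zero]
  · refine hf.eq_zero_of_forall_map_mul _ fun b => ?_
    rw [mul_assoc, ← hz, map_mul, ha, zero_mul, map_zero]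

end CommRing

section Field

variable {k A B : Type*} [Field k] [Ring A] [Algebra k A] [Ring B] [Algebra k B]

variable (k A) in
theorem exists_of_isSemisimpleRing [FiniteDimensional k A] [IsSemisimpleRing A] :
    ∃ t : A →ₗ[k] k, IsSymmetrizing t := by
  obtain ⟨n, D, d, _, _, _, _, ⟨e⟩⟩ :=
    IsSemisimpleRing.exists_algEquiv_pi_matrix_divisionRing_finite k A
  choose t ht ht0 using fun i => exists_trace_ne_zero k (Matrix (Fin (d i)) (Fin (d i)) (D i))
  exact ⟨_, (sum_comp_proj fun i => of_isSimpleRing (ht i) (ht0 i)).comp_algEquiv e⟩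

theorem exists_forall_eq_map_mul [FiniteDimensional k A] {f : A →ₗ[k] k}
    (hf : IsSymmetrizing f) (h : A →ₗ[k] k) : ∃ a, ∀ b, h b = f (a * b) := by
  let toDual : A →ₗ[k] Module.Dual k A := (LinearMap.mul k A).compr₂ f
  have toDual_injective : Function.Injective toDual := fun a b hab =>
    hf.eq_of_forall_map_mul_eq (LinearMap.congr_fun hab)
  obtain ⟨a, ha⟩ := (LinearMap.injective_iff_surjective_of_finrank_eq_finrank
    Subspace.dual_finrank_eq.symm).1 toDual_injective h
  exact ⟨a, fun b => (LinearMap.congr_fun ha b).symm⟩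

theorem exists_eq_mul_of_forall_mul_eq_zero [FiniteDimensional k B] {f : A →ₗ[k] k}
    {g : B →ₗ[k] k} (hf : IsSymmetrizing f) (hg : IsSymmetrizing g) {φ : A →ₐ[k] B}
    (hφ : Function.Surjective φ) {z : A} (hz : ∀ a, g (φ a) = f (z * a)) {x : A}
    (hx : ∀ j, φ j = 0 → j * x = 0) : ∃ a, x = z * a := by
  obtain ⟨h, hh⟩ : f ∘ₗ LinearMap.mulLeft k x ∈ LinearMap.range φ.toLinearMap.dualMap := by
    rw [LinearMap.range_dualMap_eq_dualAnnihilator_ker, Submodule.mem_dualAnnihilator]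
    intro j hj
    rw [LinearMap.comp_apply, LinearMap.mulLeft_apply, hf.map_mul_comm, hx j hj, map_zero]
  obtain ⟨c, hc⟩ := hg.exists_forall_eq_map_mul h
  obtain ⟨a, rfl⟩ := hφ c
  refine ⟨a, hf.eq_of_forall_map_mul_eq fun b => ?_⟩
  calc
    f (x * b) = h (φ b) := (LinearMap.congr_fun hh b).symm
    _ = g (φ (a * b)) := by rw [hc, map_mul φ]
    _ = f (z * a * b) := by rw [hz, mul_assoc]

theorem exists_central_leftSocle_generator [FiniteDimensional k A] {f : A →ₗ[k] k}
    (hf : IsSymmetrizing f) :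
    ∃ z : A, (∀ a, Commute z a) ∧ (∀ a, a * z = 0 ↔ a ∈ Ring.jacobson A) ∧
      ∀ x, x ∈ leftSocle A ↔ ∃ a, a * z = x := by
  have : IsArtinianRing A := .of_finite k A
  obtain ⟨t, ht⟩ := exists_of_isSemisimpleRing k (A ⧸ Ring.jacobson A)
  let π : A →ₐ[k] A ⧸ Ring.jacobson A := Ideal.Quotient.mkₐ k _
  have hπ : Function.Surjective π := Ideal.Quotient.mk_surjective
  have π_eq_zero_iff (a : A) : π a = 0 ↔ a ∈ Ring.jacobson A := Ideal.Quotient.eq_zero_iff_mem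
  obtain ⟨z, hz⟩ := hf.exists_forall_eq_map_mul (t ∘ₗ π.toLinearMap)
  have z_comm : ∀ a, Commute z a :=
    hf.commute_of_forall_eq_map_mul (fun a b => by simp [ht.map_mul_comm (π a)]) hz
  have annihilator (a : A) : a * z = 0 ↔ a ∈ Ring.jacobson A := by
    rw [← (z_comm a).eq, hf.mul_eq_zero_iff_map_eq_zero ht hπ hz, π_eq_zero_iff]
  refine ⟨z, z_comm, annihilator, fun x => mem_leftSocle_iff.trans ⟨fun hx => ?_, ?_⟩⟩
  · obtain ⟨a, rfl⟩ := hf.exists_eq_mul_of_forall_mul_eq_zero ht hπ hz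
      fun j hj => hx j ((π_eq_zero_iff j).1 hj)
    exact ⟨a, (z_comm a).eq.symm⟩
  · rintro ⟨a, rfl⟩ j hj
    rw [← mul_assoc, annihilator]
    exact Ideal.mul_mem_right a _ hj

end Field

end IsSymmetrizing

/-- Let `R` be a symmetric algebra over a field `k`, witnessed by a
`k`-linear functional `λ` with `λ(rs) = λ(sr)` whose kernel contains no nonzero left
ideals.  Let `J` be the Jacobson radical, `R̄ = R/J` and `S = soc(_R R)`.  Then
(a) `[R,R]` contains no nonzero left ideals of `R`; and
(b) `S` is a two-sided ideal and `S ≅ R̄` as `(R,R)`-bimodules, i.e. there is an additive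
bijection `e : S → R̄` with `e (r * x) = r • e x` and `e (x * r) = e x · r` (the right
action on `R̄` being induced by right multiplication on representatives). -/
theorem symmetric_algebra_socle_bimodule_iso_and_commutators
    {k R : Type*} [Field k] [Ring R] [Algebra k R] [FiniteDimensional k R]
    (lam : R →ₗ[k] k) (hsymm : ∀ r s : R, lam (r * s) = lam (s * r))
    (hker : ∀ I : Ideal R, (I : Set R) ⊆ {x | lam x = 0} → I = ⊥) :
    (∀ I : Ideal R, (I : Set R) ⊆ (commutatorSubgroup R : Set R) → I = ⊥) ∧
    (∀ x ∈ leftSocle R, ∀ r : R, x * r ∈ leftSocle R) ∧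
    ∃ e : leftSocle R ≃+ (R ⧸ Ideal.jacobson (⊥ : Ideal R)),
      (∀ (r : R) (x : leftSocle R), e (r • x) = r • e x) ∧
      (∀ (x : leftSocle R) (r : R) (hxr : (x : R) * r ∈ leftSocle R) (y : R),
        e x = Submodule.Quotient.mk y →
          e ⟨(x : R) * r, hxr⟩ = Submodule.Quotient.mk (y * r)) := by
  have : IsArtinianRing R := .of_finite k R
  obtain ⟨z, z_comm, annihilator, socle⟩ :=
    (IsSymmetrizing.of_forall_ideal_eq_bot hsymm hker).exists_central_leftSocle_generator
  rw [← Ideal.jacobson_bot] at annihilator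
  obtain ⟨e, he⟩ := exists_linearEquiv_quotient_of_eq_mul annihilator socle
  refine ⟨fun I hI => hker I (hI.trans (commutatorSubgroup_le_ker lam.toAddMonoidHom hsymm)),
    fun x hx r => mul_mem_leftSocle_right hx r,
    e.toAddEquiv, e.map_smul, fun x r hxr y hxy => (he _ _).2 ?_⟩
  have hx : (x : R) = y * z := (he x y).1 hxy
  calc
    (x : R) * r = y * (z * r) := by rw [hx, mul_assoc]
    _ = y * r * z := by rw [(z_comm r).eq, mul_assoc]
end

section
/- Let R be a finite-dimensional algebra over an infinite field k, let J be the Jacobson radical of R, R̄ = R/J, and S = soc(_R R) the left socle of R. Suppose that S is isomorphic to R̄ as (R,R)-bimodules (there is an additive bijection e : S → R̄ with e(r * x) = r · e(x) and e(x * r) = e(x) · r for all r ∈ R, x ∈ S) and that the commutator subgroup [R,R] contains no nonzero left ideals of R. Then R is a symmetric k-algebra: there exists a k-linear functional λ : R → k with λ(r*s) = λ(s*r) for all r, s ∈ R and whose kernel contains no nonzero left ideals of R. -/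
/-!
The preimage `u` of `1` under a bimodule isomorphism `S ≅ R̄` is central and generates the socle
`S`, so every endomorphism of the left module `S` is a right multiplication, and a two-sided ideal
containing one simple left ideal contains the whole isotypic component of `S` it lies in. Since `S`
is semisimple and finitely generated, it has only finitely many isotypic components, none of them
inside `[R,R]`. As `k` is infinite, a single functional on `R / [R,R]` can be chosen nonzero on all
of them. The largest left ideal in its kernel is two-sided because the functional kills
commutators; were it nonzero, it would contain an isotypic component of `S`.
-/

section LeftIdealCore

variable {R : Type*} [Ring R]

/-- The largest left ideal of `R` contained in the additive subgroup `A`, realized as the set of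
all `x` with `R x ⊆ A`. A functional is nondegenerate when the core of its kernel vanishes. -/
def leftIdealCore (A : AddSubgroup R) : Ideal R where
  carrier := {x | ∀ r : R, r * x ∈ A}
  add_mem' hx hy r := by rw [mul_add]; exact add_mem (hx r) (hy r)
  zero_mem' r := by rw [mul_zero]; exact zero_mem A
  smul_mem' c x hx r := by rw [smul_eq_mul, ← mul_assoc]; exact hx (r * c)

theorem le_leftIdealCore_iff {A : AddSubgroup R} {I : Ideal R} :
    I ≤ leftIdealCore A ↔ (I : Set R) ⊆ A :=
  ⟨fun h x hx ↦ one_mul x ▸ h hx 1, fun h _ hx r ↦ h (I.mul_mem_left r hx)⟩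

theorem mul_sub_mul_mem_commutatorSubgroup (r s : R) : r * s - s * r ∈ commutatorSubgroup R :=
  AddSubgroup.subset_closure ⟨r, s, rfl⟩

theorem isTwoSided_leftIdealCore {A : AddSubgroup R} (hA : commutatorSubgroup R ≤ A) :
    (leftIdealCore A).IsTwoSided where
  mul_mem_of_left {x} a hx r := by
    have hcomm : r * x * a - a * (r * x) ∈ A := hA (mul_sub_mul_mem_commutatorSubgroup _ _)
    have hmem : a * (r * x) ∈ A := mul_assoc a r x ▸ hx (a * r)
    simpa [mul_assoc] using add_mem hcomm hmem

end LeftIdealCore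

section CommutatorSubmodule

variable (k R : Type*) [CommSemiring k] [Ring R] [Algebra k R]

/-- The additive subgroup `[R,R]` of a `k`-algebra as a `k`-submodule: the `k`-linear functionals
that vanish on it are the traces on `R`. -/
def commutatorSubmodule : Submodule k R where
  __ := commutatorSubgroup R
  smul_mem' c := by
    suffices commutatorSubgroup R ≤
        (commutatorSubgroup R).comap (DistribSMul.toAddMonoidHom R c) from fun _ hx ↦ this hx
    refine (AddSubgroup.closure_le _).2 ?_
    rintro _ ⟨r, s, rfl⟩
    simpa [smul_sub] using mul_sub_mul_mem_commutatorSubgroup (c • r) s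

end CommutatorSubmodule

theorem exists_dual_le_ker_forall_not_subset_ker {k V ι : Type*} [Field k] [Infinite k]
    [AddCommGroup V] [Module k V] [Finite ι] (C : Submodule k V) (W : ι → Set V)
    (hW : ∀ i, ¬ W i ⊆ C) :
    ∃ f : Module.Dual k V, C ≤ f.ker ∧ ∀ i, ¬ W i ⊆ f.ker := by
  choose v hvW hvC using fun i ↦ Set.not_subset.1 (hW i)
  obtain ⟨g, hg⟩ := Module.exists_dual_forall_apply_ne_zero (K := k) (fun i ↦ C.mkQ (v i))
    fun i ↦ (Submodule.Quotient.mk_eq_zero C).not.2 (hvC i)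
  refine ⟨g ∘ₗ C.mkQ, ?_, fun i hi ↦ hg i (hi (hvW i))⟩
  simpa only [C.ker_mkQ] using LinearMap.ker_le_ker_comp C.mkQ g

theorem map_subtype_isotypicComponent_ne_bot {R M : Type*} [Ring R] [AddCommGroup M] [Module R M]
    (N : Submodule R M) (c : isotypicComponents R N) : Submodule.map N.subtype c ≠ ⊥ := fun h ↦
  (bot_lt_isotypicComponents c.2).ne' <|
    Submodule.map_injective_of_injective N.subtype_injective (h.trans (Submodule.map_bot _).symm)

section CentralGenerator

variable {R : Type*} [Ring R]

theorem exists_mem_center_eq_span_singleton {S I : Ideal R} [S.IsTwoSided] (e : S ≃+ (R ⧸ I))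
    (he_left : ∀ (r : R) (x : S), e (r • x) = r • e x)
    (he_right : ∀ (x : S) (r : R) (hxr : (x : R) * r ∈ S) (y : R),
      e x = Submodule.Quotient.mk y → e ⟨(x : R) * r, hxr⟩ = Submodule.Quotient.mk (y * r)) :
    ∃ u ∈ Subring.center R, S = Ideal.span {u} := by
  obtain ⟨u, hu⟩ := e.surjective (Submodule.Quotient.mk 1)
  have e_smul (r : R) : e (r • u) = Submodule.Quotient.mk r := by
    rw [he_left, hu, ← Submodule.Quotient.mk_smul, smul_eq_mul, mul_one]
  refine ⟨u, Subring.mem_center_iff.2 fun r ↦ ?_, le_antisymm (fun x hx ↦ ?_) ?_⟩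
  · have hur : e ⟨u * r, S.mul_mem_right r u.2⟩ = e (r • u) := by
      rw [he_right u r _ 1 hu, one_mul, e_smul]
    exact congrArg Subtype.val (e.injective hur).symm
  · obtain ⟨r, hr⟩ := Submodule.Quotient.mk_surjective I (e ⟨x, hx⟩)
    have hx_eq : r • u = ⟨x, hx⟩ := e.injective ((e_smul r).trans hr)
    exact Ideal.mem_span_singleton'.2 ⟨r, congrArg Subtype.val hx_eq⟩
  · exact (Ideal.span_singleton_le_iff_mem S).2 u.2

variable {S : Ideal R} {u : R}

theorem exists_forall_end_apply_eq_mul (hu : u ∈ Subring.center R) (hS : S = Ideal.span {u})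
    (f : Module.End R S) : ∃ a : R, ∀ x : S, (f x : R) = x * a := by
  subst hS
  let u' : Ideal.span {u} := ⟨u, Ideal.mem_span_singleton_self u⟩
  obtain ⟨a, ha⟩ := Ideal.mem_span_singleton'.1 (f u').2
  refine ⟨a, fun x ↦ ?_⟩
  obtain ⟨y, hy⟩ := Ideal.mem_span_singleton'.1 x.2
  calc (f x : R) = f (y • u') := by rw [show x = y • u' from Subtype.ext hy.symm]
    _ = y * (a * u) := by rw [map_smul, ha]; rfl
    _ = x * a := by rw [Subring.mem_center_iff.1 hu a, ← mul_assoc, hy]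

theorem isFullyInvariant_comap_subtype (hu : u ∈ Subring.center R) (hS : S = Ideal.span {u})
    (T : Ideal R) [T.IsTwoSided] : (Submodule.comap S.subtype T).IsFullyInvariant := by
  intro f x hx
  obtain ⟨a, ha⟩ := exists_forall_end_apply_eq_mul hu hS f
  change (f x : R) ∈ T
  exact ha x ▸ T.mul_mem_right a hx

end CentralGenerator

section LeftSocle

variable {R : Type*} [Ring R]

instance isSemisimpleModule_leftSocle_s16 : IsSemisimpleModule R (leftSocle R) := by
  rw [leftSocle, sSup_eq_iSup]
  refine isSemisimpleModule_biSup_of_isSemisimpleModule_submodule fun I hI ↦ ?_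
  have : IsSimpleModule R I := hI
  infer_instance

theorem exists_isotypicComponent_map_le [IsAtomic (Ideal R)] {u : R}
    (hu : u ∈ Subring.center R) (hS : leftSocle R = Ideal.span {u})
    {T : Ideal R} [T.IsTwoSided] (hT : T ≠ ⊥) :
    ∃ c : isotypicComponents R (leftSocle R),
      Submodule.map (leftSocle R).subtype c ≤ T := by
  obtain ⟨L, hL, hLT⟩ := (IsAtomic.eq_bot_or_exists_atom_le T).resolve_left hT
  have hL_simple : IsSimpleModule R L := isSimpleModule_iff_isAtom.2 hL
  have hLS : L ≤ leftSocle R := le_sSup hL_simple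
  let L' : Submodule R (leftSocle R) := Submodule.comap (leftSocle R).subtype L
  have hL'_simple : IsSimpleModule R L' :=
    IsSimpleModule.congr (Submodule.comapSubtypeEquivOfLe hLS)
  exact ⟨⟨isotypicComponent R _ L', L', hL'_simple, rfl⟩, Submodule.map_le_iff_le_comap.2 <|
    isFullyInvariant_iff_le_imp_isotypicComponent_le.1 (isFullyInvariant_comap_subtype hu hS T) L'
      (Submodule.comap_mono hLT)⟩

theorem leftIdealCore_eq_bot_of_forall_not_subset [IsAtomic (Ideal R)] {u : R}
    (hu : u ∈ Subring.center R) (hS : leftSocle R = Ideal.span {u})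
    {A : AddSubgroup R} (hA : commutatorSubgroup R ≤ A)
    (h : ∀ c : isotypicComponents R (leftSocle R),
      ¬ (Submodule.map (leftSocle R).subtype c : Set R) ⊆ A) :
    leftIdealCore A = ⊥ := by
  have := isTwoSided_leftIdealCore hA
  by_contra hcore
  obtain ⟨c, hc⟩ := exists_isotypicComponent_map_le hu hS hcore
  exact h c (le_leftIdealCore_iff.1 hc)

end LeftSocle

theorem symmetric_of_socle_bimodule_iso_and_commutators_general
    {k R : Type*} [Field k] [Infinite k] [Ring R] [Algebra k R] [IsAtomic (Ideal R)] {u : R}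
    (hu : u ∈ Subring.center R) (hS : leftSocle R = Ideal.span {u})
    (hcomm : ∀ I : Ideal R, (I : Set R) ⊆ (commutatorSubgroup R : Set R) → I = ⊥) :
    ∃ lam : R →ₗ[k] k, (∀ r s : R, lam (r * s) = lam (s * r)) ∧
      ∀ I : Ideal R, (I : Set R) ⊆ {x | lam x = 0} → I = ⊥ := by
  have : Module.Finite R (leftSocle R) := hS ▸ Module.Finite.span_singleton R u
  obtain ⟨lam, hlam, hne⟩ := exists_dual_le_ker_forall_not_subset_ker (commutatorSubmodule k R)
    (fun c : isotypicComponents R (leftSocle R) ↦ Submodule.map (leftSocle R).subtype c)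
    fun c hc ↦ map_subtype_isotypicComponent_ne_bot _ c (hcomm _ hc)
  have hlam_comm : commutatorSubgroup R ≤ lam.ker.toAddSubgroup := hlam
  refine ⟨lam, fun r s ↦ ?_, fun I hI ↦ eq_bot_iff.2 ?_⟩
  · rw [← sub_eq_zero, ← map_sub]
    exact hlam (mul_sub_mul_mem_commutatorSubgroup r s)
  · rw [← leftIdealCore_eq_bot_of_forall_not_subset hu hS hlam_comm hne]
    exact le_leftIdealCore_iff.2 hI

/-- Let `R` be a finite-dimensional algebra over an infinite field `k`,
`J` its Jacobson radical, `R̄ = R/J`, and `S = soc(_R R)` the left socle.  Suppose `S` is a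
two-sided ideal and `S ≅ R̄` as `(R,R)`-bimodules (there is an additive bijection
`e : S → R̄` with `e (r * x) = r • e x` and `e (x * r) = e x · r`, the right action on `R̄`
being induced by right multiplication on representatives), and suppose `[R,R]` contains no
nonzero left ideals of `R`.  Then `R` is a symmetric `k`-algebra: there is a `k`-linear
functional `λ : R → k` with `λ(rs) = λ(sr)` for all `r, s` whose kernel contains no nonzero
left ideals of `R`. -/
theorem symmetric_of_socle_bimodule_iso_and_commutators
    {k R : Type*} [Field k] [Infinite k] [Ring R] [Algebra k R] [FiniteDimensional k R]
    (hS2 : ∀ x ∈ leftSocle R, ∀ r : R, x * r ∈ leftSocle R)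
    (e : leftSocle R ≃+ (R ⧸ Ideal.jacobson (⊥ : Ideal R)))
    (he₁ : ∀ (r : R) (x : leftSocle R), e (r • x) = r • e x)
    (he₂ : ∀ (x : leftSocle R) (r : R) (hxr : (x : R) * r ∈ leftSocle R) (y : R),
      e x = Submodule.Quotient.mk y →
        e ⟨(x : R) * r, hxr⟩ = Submodule.Quotient.mk (y * r))
    (hcomm : ∀ I : Ideal R, (I : Set R) ⊆ (commutatorSubgroup R : Set R) → I = ⊥) :
    ∃ lam : R →ₗ[k] k, (∀ r s : R, lam (r * s) = lam (s * r)) ∧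
      ∀ I : Ideal R, (I : Set R) ⊆ {x | lam x = 0} → I = ⊥ := by
  have : (leftSocle R).IsTwoSided := ⟨fun r hx ↦ hS2 _ hx r⟩
  have : IsArtinianRing R := IsArtinianRing.of_finite k R
  obtain ⟨u, hu, hS⟩ := exists_mem_center_eq_span_singleton e he₁ he₂
  exact symmetric_of_socle_bimodule_iso_and_commutators_general hu hS hcomm
end

section
/- Let R be a finite-dimensional algebra over a field k and let S = soc(_R R) be its left socle. Let H' be a k-subspace of S of codimension 1 in S which contains no nonzero left ideals of R, and let C be a k-subspace of R with C ∩ S ⊆ H'. Then there exists a k-subspace H of R of codimension 1 in R (a hyperplane) such that C ⊆ H, H ∩ S = H', and H contains no nonzero left ideals of R. -/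
/-!
Every nonzero left ideal of an Artinian ring contains a simple one, so the left socle `S` is
essential: a left ideal `I ⊆ H` meets `S` inside `H ∩ S = H'`, hence trivially, hence `I = 0`.
It remains to extend `H'` to a hyperplane containing `C` without enlarging its trace on `S`. This
is a fact about complemented modular lattices: `(H' + C) ∩ S = H'` by modularity, and a complement
`H` of `H' + C + S` relative to `H' + C` works, because `H ∩ S = H' ⋖ S` forces `H ⋖ H + S = R`.
-/

section Lattice

variable {α : Type*}

theorem exists_isCoatom_inf_eq_of_covBy [Lattice α] [BoundedOrder α] [IsModularLattice α]
    [ComplementedLattice α] {a b c : α} (hab : a ⋖ b) (hcb : c ⊓ b ≤ a) :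
    ∃ h, IsCoatom h ∧ c ≤ h ∧ h ⊓ b = a := by
  have trace_eq : (a ⊔ c) ⊓ b = a := by
    rw [sup_inf_assoc_of_le c hab.le, sup_eq_left.mpr hcb]
  obtain ⟨h, inf_eq, codisjoint⟩ :=
    IsModularLattice.exists_inf_eq_and_codisjoint (le_sup_left : a ⊔ c ≤ a ⊔ c ⊔ b)
  have le_h : a ⊔ c ≤ h := inf_eq ▸ inf_le_right
  have h_inf : h ⊓ b = a := calc
    h ⊓ b = (a ⊔ c ⊔ b) ⊓ h ⊓ b := by
      rw [inf_right_comm, inf_eq_right.mpr (le_sup_right : b ≤ a ⊔ c ⊔ b), inf_comm]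
    _ = a := by rw [inf_eq, trace_eq]
  have h_sup : h ⊔ b = ⊤ := calc
    h ⊔ b = a ⊔ c ⊔ b ⊔ h := by rw [sup_right_comm, sup_eq_right.mpr le_h]
    _ = ⊤ := codisjoint.eq_top
  have h_covBy : h ⋖ h ⊔ b := covBy_sup_of_inf_covBy_right (h_inf.symm ▸ hab)
  exact ⟨h, covBy_top_iff.mp (h_sup ▸ h_covBy), le_sup_right.trans le_h, h_inf⟩

/-- Essential submodules, stated order-theoretically: only `⊥` is disjoint from `a`. The socle
enters the argument only through being essential. -/
def IsEssential [PartialOrder α] [OrderBot α] (a : α) : Prop :=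
  ∀ ⦃b⦄, Disjoint b a → b = ⊥

theorem isEssential_sSup_isAtom [CompleteLattice α] [IsAtomic α] :
    IsEssential (sSup {a : α | IsAtom a}) := by
  intro b hb
  refine (IsAtomic.eq_bot_or_exists_atom_le b).resolve_right ?_
  rintro ⟨a, ha, hab⟩
  exact ha.ne_bot (le_bot_iff.mp (hb hab (le_sSup ha)))

end Lattice

section Subspace

variable {k V : Type*} [DivisionRing k] [AddCommGroup V] [Module k V]

theorem covBy_of_finrank_eq_add_one {U W : Submodule k V} (hUW : U ≤ W)
    (hfinrank : Module.finrank k W = Module.finrank k U + 1) : U ⋖ W := by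
  have : FiniteDimensional k W := .of_finrank_pos (by lia)
  refine ⟨lt_of_le_of_ne hUW (by rintro rfl; lia), fun X hUX hXW ↦ ?_⟩
  have : FiniteDimensional k X := Submodule.finiteDimensional_of_le hXW.le
  have := Submodule.finrank_lt_finrank_of_lt hUX
  have := Submodule.finrank_lt_finrank_of_lt hXW
  lia

theorem finrank_quotient_eq_one_iff_isCoatom {H : Submodule k V} :
    Module.finrank k (V ⧸ H) = 1 ↔ IsCoatom H := by
  rw [← isSimpleModule_iff_finrank_eq_one, isSimpleModule_iff_isCoatom]

end Subspace

theorem isEssential_leftSocle (R : Type*) [Ring R] [IsAtomic (Ideal R)] :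
    IsEssential (leftSocle R) := by
  simpa only [leftSocle, isSimpleModule_iff_isAtom] using isEssential_sSup_isAtom (α := Ideal R)

theorem eq_bot_of_restrictScalars_le_of_isEssential {k R M : Type*} [Semiring k] [Semiring R]
    [SMul k R] [AddCommMonoid M] [Module k M] [Module R M] [IsScalarTower k R M]
    {S : Submodule R M} (hS : IsEssential S) {H : Submodule k M}
    (hHS : ∀ N : Submodule R M, N.restrictScalars k ≤ H ⊓ S.restrictScalars k → N = ⊥)
    {N : Submodule R M} (hN : N.restrictScalars k ≤ H) : N = ⊥ :=
  hS (disjoint_iff.mpr (hHS (N ⊓ S) (inf_le_inf_right (S.restrictScalars k) hN)))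

theorem extend_socle_hyperplane_general {k R M : Type*} [DivisionRing k] [Semiring R] [SMul k R]
    [AddCommGroup M] [Module k M] [Module R M] [IsScalarTower k R M]
    {S : Submodule R M} (hS : IsEssential S)
    {H' : Submodule k M} (hH'S : H' ⋖ S.restrictScalars k)
    (hH' : ∀ N : Submodule R M, N.restrictScalars k ≤ H' → N = ⊥)
    {C : Submodule k M} (hC : C ⊓ S.restrictScalars k ≤ H') :
    ∃ H : Submodule k M, C ≤ H ∧ H ⊓ S.restrictScalars k = H' ∧
      Module.finrank k (M ⧸ H) = 1 ∧
      ∀ N : Submodule R M, N.restrictScalars k ≤ H → N = ⊥ := by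
  obtain ⟨H, hH, hCH, rfl⟩ := exists_isCoatom_inf_eq_of_covBy hH'S hC
  exact ⟨H, hCH, rfl, finrank_quotient_eq_one_iff_isCoatom.mpr hH,
    fun _ ↦ eq_bot_of_restrictScalars_le_of_isEssential hS hH'⟩

/-- Let `R` be a finite-dimensional algebra over a field `k` with left
socle `S`.  Let `H'` be a `k`-subspace of `S` of codimension 1 in `S` containing no
nonzero left ideals of `R`, and let `C` be a `k`-subspace of `R` with `C ∩ S ⊆ H'`.  Then
there is a `k`-hyperplane `H` of `R` (a subspace of codimension 1) with `C ⊆ H`,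
`H ∩ S = H'`, and such that `H` contains no nonzero left ideals of `R`. -/
theorem extend_socle_hyperplane
    {k R : Type*} [Field k] [Ring R] [Algebra k R] [FiniteDimensional k R]
    (H' : Submodule k R) (hH'S : H' ≤ (leftSocle R).restrictScalars k)
    (hcodim : Module.finrank k ((leftSocle R).restrictScalars k) = Module.finrank k H' + 1)
    (hH' : ∀ I : Ideal R, (I : Set R) ⊆ (H' : Set R) → I = ⊥)
    (C : Submodule k R) (hC : C ⊓ (leftSocle R).restrictScalars k ≤ H') :
    ∃ H : Submodule k R, C ≤ H ∧ H ⊓ (leftSocle R).restrictScalars k = H' ∧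
      Module.finrank k (R ⧸ H) = 1 ∧
      ∀ I : Ideal R, (I : Set R) ⊆ (H : Set R) → I = ⊥ := by
  have : IsArtinianRing R := .of_finite k R
  exact extend_socle_hyperplane_general (isEssential_leftSocle R)
    (covBy_of_finrank_eq_add_one hH'S hcodim) hH' hC
end
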